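/- arXiv:2404.07311 — 9 statements merged into one kernel-verified Lean document; each statement's English description precedes it below -/
import Mathlib

section
/- The average differential entropy satisfies h(X|W) = (n/2)·ln(2πσ²) − (μ/q)^{n/2}·(2π)^{−qn/2}·(1/q)·Σ_{j=1}^q ∫_{(ℝⁿ)^q} exp(−(1/2)Σ_{a=1}^q ‖z_a‖² + (1/(2q))‖Σ_{a=1}^q z_a‖² − (μ/2)‖z_j‖²) · ln[(1/q)Σ_{k=1}^q exp(−(μ/2)‖z_k‖²)] dz_1⋯dz_q. -/
open MeasureTheory Real Finset


lemma gauss_aux (n : ℕ) (b : ℝ) (hb : 0 < b) (a : Fin n → ℝ) :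
    Integrable (fun x : Fin n → ℝ => Real.exp (-b * ∑ i, (x i + a i) ^ 2)) ∧
    ∫ x : Fin n → ℝ, Real.exp (-b * ∑ i, (x i + a i) ^ 2) = (π / b) ^ ((n : ℝ) / 2) := by
  have e : (fun x : Fin n → ℝ => Real.exp (-b * ∑ i, (x i + a i) ^ 2)) =
      fun x => ∏ i, (fun (i : Fin n) (y : ℝ) => Real.exp (-b * (y + a i) ^ 2)) i (x i) := by
    funext x
    rw [Finset.mul_sum, Real.exp_sum]
  rw [e]
  constructor
  · apply Integrable.fintype_prod (f := fun (i : Fin n) (y : ℝ) => Real.exp (-b * (y + a i) ^ 2))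
    intro i
    exact (integrable_exp_neg_mul_sq hb).comp_add_right (a i)
  · rw [integral_fintype_prod_volume_eq_prod
      (f := fun (i : Fin n) (y : ℝ) => Real.exp (-b * (y + a i) ^ 2))]
    have h1 : ∀ i, ∫ y : ℝ, Real.exp (-b * (y + a i) ^ 2) = √(π / b) := by
      intro i
      rw [integral_add_right_eq_self (fun y : ℝ => Real.exp (-b * y ^ 2)), integral_gaussian]
    simp only [h1, Finset.prod_const, Finset.card_univ, Fintype.card_fin]
    have h2 : 0 ≤ π / b := by positivity
    rw [Real.sqrt_eq_rpow, ← Real.rpow_natCast, ← Real.rpow_mul h2]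
    congr 1
    ring

lemma shift_aux (q n : ℕ) (s : ℝ) (hs : 0 < s)
    (G : (Fin q → Fin n → ℝ) → (Fin n → ℝ) → ℝ)
    (hc : Continuous (fun p : (Fin q → Fin n → ℝ) × (Fin n → ℝ) => G p.1 p.2))
    (hG : Integrable (fun p : (Fin q → Fin n → ℝ) × (Fin n → ℝ) => G p.1 p.2)) :
    Integrable (fun p : (Fin q → Fin n → ℝ) × (Fin n → ℝ) =>
      G (s⁻¹ • (p.1 - fun _ => p.2)) p.2) ∧
    ∫ w, ∫ x, G (s⁻¹ • (w - fun _ => x)) x = s ^ (q * n) * ∫ z, ∫ x, G z x := by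
  have hfr : Module.finrank ℝ (Fin q → Fin n → ℝ) = q * n := by
    simp [Module.finrank_pi_fintype]
  have hint : ∀ (g : (Fin q → Fin n → ℝ) → ℝ) (v : Fin q → Fin n → ℝ),
      ∫ w, g (s⁻¹ • (w - v)) = s ^ (q * n) * ∫ z, g z := by
    intro g v
    rw [integral_sub_right_eq_self (fun w => g (s⁻¹ • w)) v,
      Measure.integral_comp_inv_smul, hfr, abs_of_pos (by positivity), smul_eq_mul]
  have hc' : Continuous (fun p : (Fin q → Fin n → ℝ) × (Fin n → ℝ) =>
      G (s⁻¹ • (p.1 - fun _ => p.2)) p.2) :=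
    hc.comp (f := fun p : (Fin q → Fin n → ℝ) × (Fin n → ℝ) =>
      (s⁻¹ • (p.1 - fun _ => p.2), p.2)) (by fun_prop)
  have hI : Integrable (fun p : (Fin q → Fin n → ℝ) × (Fin n → ℝ) =>
      G (s⁻¹ • (p.1 - fun _ => p.2)) p.2) := by
    rw [Measure.volume_eq_prod] at hG ⊢
    rw [integrable_prod_iff' hc'.aestronglyMeasurable]
    rw [integrable_prod_iff' hc.aestronglyMeasurable] at hG
    obtain ⟨h1, h2⟩ := hG
    constructor
    · filter_upwards [h1] with x hx
      exact (hx.comp_smul (inv_ne_zero hs.ne')).comp_sub_right (fun _ => x)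
    · have : ∀ x, ∫ w, ‖G (s⁻¹ • (w - fun _ => x)) x‖ = s ^ (q * n) * ∫ z, ‖G z x‖ :=
        fun x => hint (fun z => ‖G z x‖) (fun _ => x)
      simp only [this]
      exact h2.const_mul _
  refine ⟨hI, ?_⟩
  rw [integral_integral_swap hI, integral_integral_swap hG, ← integral_const_mul]
  congr 1
  funext x
  exact hint (fun z => G z x) (fun _ => x)

/-- Lemma 1 of the paper.
The average differential entropy of a `q`-component Gaussian mixture in `ℝⁿ`,
with component means i.i.d. centered Gaussian with covariance `s² 1` and shared
component covariance `σ² 1`, equals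
`(n/2)·ln(2πσ²) − (μ/q)^{n/2} (2π)^{−qn/2} (1/q) Σ_j ∫ exp(…) ln(…) dz`. -/
theorem average_entropy_first_change_of_variables
    (q n : ℕ) (hq : 2 ≤ q) (hn : 1 ≤ n)
    (σ s : ℝ) (hσ : 0 < σ) (hs : 0 < s)
    (μ : ℝ) (hμ : μ = s ^ 2 / σ ^ 2)
    -- the Gaussian mixture density `f(x|w)`
    (f : (Fin q → Fin n → ℝ) → (Fin n → ℝ) → ℝ)
    (hf : ∀ w x, f w x =
      (1 / (q : ℝ)) * ∑ j : Fin q, (2 * π * σ ^ 2) ^ (-(n : ℝ) / 2) *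
        Real.exp (-(∑ i, (x i - w j i) ^ 2) / (2 * σ ^ 2)))
    -- the conditional differential entropy `h(X | W = w)`
    (hEnt : (Fin q → Fin n → ℝ) → ℝ)
    (hhEnt : ∀ w, hEnt w = -∫ x : Fin n → ℝ, f w x * Real.log (f w x))
    (hInt1 : ∀ w, Integrable (fun x : Fin n → ℝ => f w x * Real.log (f w x)))
    -- the average differential entropy `h(X|W)`
    (H : ℝ)
    (hH : H = ∫ w : Fin q → Fin n → ℝ,
      (∏ j : Fin q, (2 * π * s ^ 2) ^ (-(n : ℝ) / 2) *
        Real.exp (-(∑ i, w j i ^ 2) / (2 * s ^ 2))) * hEnt w)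
    (hInt2 : Integrable (fun w : Fin q → Fin n → ℝ =>
      (∏ j : Fin q, (2 * π * s ^ 2) ^ (-(n : ℝ) / 2) *
        Real.exp (-(∑ i, w j i ^ 2) / (2 * s ^ 2))) * hEnt w))
    (hInt3 : ∀ j : Fin q, Integrable (fun z : Fin q → Fin n → ℝ =>
      Real.exp (-(1 / 2) * ∑ a : Fin q, ∑ i, z a i ^ 2
          + (1 / (2 * (q : ℝ))) * ∑ i, (∑ a : Fin q, z a i) ^ 2
          - (μ / 2) * ∑ i, z j i ^ 2) *
        Real.log ((1 / (q : ℝ)) * ∑ k : Fin q,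
          Real.exp (-(μ / 2) * ∑ i, z k i ^ 2)))) :
    H = ((n : ℝ) / 2) * Real.log (2 * π * σ ^ 2)
      - (μ / (q : ℝ)) ^ ((n : ℝ) / 2) * (2 * π) ^ (-((q : ℝ) * (n : ℝ)) / 2) * (1 / (q : ℝ)) *
        ∑ j : Fin q, ∫ z : Fin q → Fin n → ℝ,
          Real.exp (-(1 / 2) * ∑ a : Fin q, ∑ i, z a i ^ 2
              + (1 / (2 * (q : ℝ))) * ∑ i, (∑ a : Fin q, z a i) ^ 2
              - (μ / 2) * ∑ i, z j i ^ 2) *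
            Real.log ((1 / (q : ℝ)) * ∑ k : Fin q,
              Real.exp (-(μ / 2) * ∑ i, z k i ^ 2)) := by
  have hq0 : (0 : ℝ) < q := by
    have : 0 < q := by omega
    exact_mod_cast this
  have hμ0 : 0 < μ := by rw [hμ]; positivity
  have : Nonempty (Fin q) := ⟨⟨0, by omega⟩⟩
  have hπ := Real.pi_pos
  set c : ℝ := (2 * π * σ ^ 2) ^ (-(n : ℝ) / 2) with hcdef
  set d : ℝ := (2 * π * s ^ 2) ^ (-(n : ℝ) / 2) with hddef
  have hc0 : 0 < c := by positivity
  have hd0 : 0 < d := by positivity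
  have hlogc : Real.log c = -((n : ℝ) / 2 * Real.log (2 * π * σ ^ 2)) := by
    rw [hcdef, Real.log_rpow (by positivity)]; ring
  -- the unnormalised mixture in terms of the rescaled variable
  obtain ⟨g0, hg0⟩ : ∃ g0 : (Fin q → Fin n → ℝ) → ℝ, ∀ z, g0 z =
      (1 / (q : ℝ)) * ∑ k : Fin q, Real.exp (-(μ / 2) * ∑ i, z k i ^ 2) := ⟨_, fun _ => rfl⟩
  have hg0pos : ∀ z, 0 < g0 z := by
    intro z
    rw [hg0]
    exact mul_pos (by positivity) (Finset.sum_pos (fun _ _ => Real.exp_pos _) univ_nonempty)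
  have hg0c : Continuous g0 := by
    have : g0 = _ := funext hg0
    rw [this]; fun_prop
  have hLc : Continuous (fun z => g0 z * Real.log (g0 z)) :=
    hg0c.mul (hg0c.log fun z => (hg0pos z).ne')
  have hfg : ∀ w x, f w x = c * g0 (s⁻¹ • (w - fun _ => x)) := by
    intro w x
    rw [hf, hg0, ← Finset.mul_sum, mul_left_comm]
    congr 3
    funext j
    congr 1
    simp only [Pi.smul_apply, Pi.sub_apply, smul_eq_mul, mul_pow, ← Finset.mul_sum]
    have : ∑ i, (w j i - x i) ^ 2 = ∑ i, (x i - w j i) ^ 2 :=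
      Finset.sum_congr rfl fun i _ => by ring
    rw [this, hμ]
    field_simp
  obtain ⟨P, hP⟩ : ∃ P : (Fin q → Fin n → ℝ) → ℝ, ∀ w, P w =
      ∏ j : Fin q, d * Real.exp (-(∑ i, w j i ^ 2) / (2 * s ^ 2)) := ⟨_, fun _ => rfl⟩
  simp only [← hP] at hH hInt2
  have hPc : Continuous P := by
    have : P = _ := funext hP
    rw [this]; fun_prop
  have hPpos : ∀ w, 0 < P w := by
    intro w; rw [hP]; exact Finset.prod_pos fun _ _ => by positivity
  have hnorm : ∀ t : ℝ, 0 < t →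
      (2 * π * t ^ 2) ^ (-(n : ℝ) / 2) * (π / (1 / (2 * t ^ 2))) ^ ((n : ℝ) / 2) = 1 := by
    intro t ht
    have : π / (1 / (2 * t ^ 2)) = 2 * π * t ^ 2 := by field_simp
    rw [this, ← Real.rpow_add (by positivity)]
    have : -(n : ℝ) / 2 + n / 2 = 0 := by ring
    rw [this, Real.rpow_zero]
  -- normalisation of `P`
  have hPint : Integrable P ∧ ∫ w, P w = 1 := by
    have e : P = fun w => ∏ j : Fin q, (fun (_ : Fin q) (y : Fin n → ℝ) =>
        d * Real.exp (-(1 / (2 * s ^ 2)) * ∑ i, (y i + (0 : Fin n → ℝ) i) ^ 2)) j (w j) := by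
      funext w
      rw [hP]
      refine Finset.prod_congr rfl fun j _ => ?_
      simp only [Pi.zero_apply, add_zero]
      congr 2
      ring
    have hg := gauss_aux n (1 / (2 * s ^ 2)) (by positivity) 0
    rw [e]
    constructor
    · apply Integrable.fintype_prod (f := fun (_ : Fin q) (y : Fin n → ℝ) =>
        d * Real.exp (-(1 / (2 * s ^ 2)) * ∑ i, (y i + (0 : Fin n → ℝ) i) ^ 2))
      intro i
      exact hg.1.const_mul d
    · rw [integral_fintype_prod_volume_eq_prod (f := fun (_ : Fin q) (y : Fin n → ℝ) =>
        d * Real.exp (-(1 / (2 * s ^ 2)) * ∑ i, (y i + (0 : Fin n → ℝ) i) ^ 2))]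
      apply Finset.prod_eq_one
      intro i _
      rw [integral_const_mul, hg.2, hddef, hnorm s hs]
  -- normalisation of `f`
  have hfint : ∀ w, Integrable (f w) ∧ ∫ x, f w x = 1 := by
    intro w
    have e : f w = fun x => (1 / (q : ℝ)) * ∑ j : Fin q,
        c * Real.exp (-(1 / (2 * σ ^ 2)) * ∑ i, (x i + (-w j) i) ^ 2) := by
      funext x
      rw [hf]
      congr 1
      refine Finset.sum_congr rfl fun j _ => ?_
      congr 2
      simp only [Pi.neg_apply, ← sub_eq_add_neg]
      ring
    have hg := fun j => gauss_aux n (1 / (2 * σ ^ 2)) (by positivity) (-w j)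
    rw [e]
    constructor
    · exact (integrable_finsetSum _ fun j _ => (hg j).1.const_mul c).const_mul _
    · rw [integral_const_mul, integral_finsetSum _ fun j _ => (hg j).1.const_mul c]
      have : ∀ j, ∫ x : Fin n → ℝ,
          c * Real.exp (-(1 / (2 * σ ^ 2)) * ∑ i, (x i + (-w j) i) ^ 2) = 1 := by
        intro j
        rw [integral_const_mul, (hg j).2, hcdef, hnorm σ hσ]
      simp only [this]
      simp [hq0.ne']
  -- the entropy for fixed `w`
  have hE : ∀ w, hEnt w = (n : ℝ) / 2 * Real.log (2 * π * σ ^ 2) -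
      c * ∫ x, g0 (s⁻¹ • (w - fun _ => x)) * Real.log (g0 (s⁻¹ • (w - fun _ => x))) := by
    intro w
    have e : ∀ x, c * (g0 (s⁻¹ • (w - fun _ => x)) * Real.log (g0 (s⁻¹ • (w - fun _ => x)))) =
        f w x * Real.log (f w x) - Real.log c * f w x := by
      intro x
      rw [hfg, Real.log_mul hc0.ne' (hg0pos _).ne']
      ring
    rw [← integral_const_mul]
    simp only [e]
    rw [integral_sub (hInt1 w) ((hfint w).1.const_mul _), integral_const_mul, (hfint w).2,
      hlogc, hhEnt]
    ring
  -- the Gaussian integral over `x`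
  obtain ⟨A, hA⟩ : ∃ A : (Fin q → Fin n → ℝ) → ℝ, ∀ z, A z =
      -(1 / 2) * ∑ a : Fin q, ∑ i, z a i ^ 2
          + (1 / (2 * (q : ℝ))) * ∑ i, (∑ a : Fin q, z a i) ^ 2 := ⟨_, fun _ => rfl⟩
  simp only [← hA, ← hg0] at hInt3 ⊢
  set K : ℝ := d ^ q * (π / (q / (2 * s ^ 2))) ^ ((n : ℝ) / 2) with hK
  have hPx : ∀ z : Fin q → Fin n → ℝ, Integrable (fun x : Fin n → ℝ => P (s • z + fun _ => x)) ∧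
      ∫ x : Fin n → ℝ, P (s • z + fun _ => x) = K * Real.exp (A z) := by
    intro z
    have hg := gauss_aux n (q / (2 * s ^ 2)) (by positivity) (fun i => s / q * ∑ a, z a i)
    have e : (fun x : Fin n → ℝ => P (s • z + fun _ => x)) = fun x =>
        (d ^ q * Real.exp (A z)) *
        Real.exp (-(q / (2 * s ^ 2)) * ∑ i, (x i + s / q * ∑ a, z a i) ^ 2) := by
      funext x
      rw [hP, Finset.prod_mul_distrib, ← Real.exp_sum, mul_assoc, ← Real.exp_add]
      simp only [Finset.prod_const, Finset.card_univ, Fintype.card_fin]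
      congr 2
      rw [hA, Finset.sum_comm (f := fun a i => z a i ^ 2), ← Finset.sum_div,
        Finset.sum_neg_distrib, Finset.sum_comm, Finset.mul_sum, Finset.mul_sum, Finset.mul_sum,
        ← Finset.sum_add_distrib, ← Finset.sum_add_distrib, ← Finset.sum_neg_distrib,
        Finset.sum_div]
      refine Finset.sum_congr rfl fun i _ => ?_
      have h1 : ∑ j, (s • z + fun _ => x : Fin q → Fin n → ℝ) j i ^ 2 =
          s ^ 2 * ∑ j, z j i ^ 2 + 2 * s * x i * ∑ j, z j i + q * x i ^ 2 := by
        simp only [Pi.add_apply, Pi.smul_apply, smul_eq_mul]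
        rw [Finset.mul_sum, Finset.mul_sum, ← Finset.sum_add_distrib]
        have : (q : ℝ) * x i ^ 2 = ∑ j : Fin q, x i ^ 2 := by simp
        rw [this, ← Finset.sum_add_distrib]
        exact Finset.sum_congr rfl fun j _ => by ring
      rw [h1]
      field_simp
      ring
    rw [e]
    refine ⟨hg.1.const_mul _, ?_⟩
    rw [integral_const_mul, hg.2, hK]
    ring
  -- integrability on the product
  have hsum : ∀ z, Real.exp (A z) * (g0 z * Real.log (g0 z)) = (1 / (q : ℝ)) * ∑ j : Fin q,
      Real.exp (A z - μ / 2 * ∑ i, z j i ^ 2) * Real.log (g0 z) := by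
    intro z
    rw [← Finset.sum_mul]
    have : ∀ j, Real.exp (A z - μ / 2 * ∑ i, z j i ^ 2) =
        Real.exp (A z) * Real.exp (-(μ / 2) * ∑ i, z j i ^ 2) := by
      intro j; rw [← Real.exp_add]; congr 1; ring
    simp only [this]
    rw [← Finset.mul_sum]
    nth_rewrite 1 [hg0]
    ring
  have hsumI : Integrable (fun z => Real.exp (A z) * (g0 z * Real.log (g0 z))) := by
    simp only [hsum]
    exact (integrable_finsetSum _ fun j _ => hInt3 j).const_mul _
  have hGc : Continuous (fun p : (Fin q → Fin n → ℝ) × (Fin n → ℝ) =>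
      P (s • p.1 + fun _ => p.2) * (g0 p.1 * Real.log (g0 p.1))) := by
    refine Continuous.mul (hPc.comp (by fun_prop)) (hLc.comp continuous_fst)
  have hGI : Integrable (fun p : (Fin q → Fin n → ℝ) × (Fin n → ℝ) =>
      P (s • p.1 + fun _ => p.2) * (g0 p.1 * Real.log (g0 p.1))) := by
    rw [Measure.volume_eq_prod, integrable_prod_iff hGc.aestronglyMeasurable]
    refine ⟨Filter.Eventually.of_forall fun z => (hPx z).1.mul_const (g0 z * Real.log (g0 z)), ?_⟩
    have : ∀ z : Fin q → Fin n → ℝ, ∫ x : Fin n → ℝ,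
        ‖P (s • z + fun _ => x) * (g0 z * Real.log (g0 z))‖ =
        K * ‖Real.exp (A z) * (g0 z * Real.log (g0 z))‖ := by
      intro z
      simp only [norm_mul (P _), Real.norm_of_nonneg (hPpos _).le]
      rw [integral_mul_const, (hPx z).2, norm_mul (Real.exp _),
        Real.norm_of_nonneg (Real.exp_pos _).le]
      ring
    simp only [this]
    exact hsumI.norm.const_mul _
  obtain ⟨hFI, hFeq⟩ := shift_aux q n s hs
    (fun z x => P (s • z + fun _ => x) * (g0 z * Real.log (g0 z))) hGc hGI
  have hsimp : ∀ (w : Fin q → Fin n → ℝ) (x : Fin n → ℝ),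
      s • s⁻¹ • (w - fun _ => x) + (fun _ => x) = w := by
    intro w x
    rw [smul_inv_smul₀ hs.ne', sub_add_cancel]
  simp only [hsimp] at hFI hFeq
  rw [Measure.volume_eq_prod] at hFI
  have hFI1 := hFI.integral_prod_left
  simp only [integral_const_mul] at hFI1 hFeq
  have hcalc : ∀ w, P w * hEnt w = (n : ℝ) / 2 * Real.log (2 * π * σ ^ 2) * P w -
      c * (P w * ∫ x, g0 (s⁻¹ • (w - fun _ => x)) * Real.log (g0 (s⁻¹ • (w - fun _ => x)))) := by
    intro w; rw [hE]; ring
  have hconst : c * (s ^ (q * n) * K) =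
      (μ / (q : ℝ)) ^ ((n : ℝ) / 2) * (2 * π) ^ (-((q : ℝ) * (n : ℝ)) / 2) := by
    have h1 : s ^ (q * n) * d ^ q = (2 * π) ^ (-((q : ℝ) * (n : ℝ)) / 2) := by
      have hs2 : (s ^ 2) ^ (-((q : ℝ) * (n : ℝ)) / 2) = (s ^ (q * n))⁻¹ := by
        rw [← Real.rpow_natCast s 2, ← Real.rpow_natCast s (q * n), ← Real.rpow_neg hs.le,
          ← Real.rpow_mul hs.le]
        congr 1
        push_cast
        ring
      have hdq : d ^ q = (2 * π * s ^ 2) ^ (-((q : ℝ) * (n : ℝ)) / 2) := by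
        rw [hddef, ← Real.rpow_natCast, ← Real.rpow_mul (by positivity)]
        congr 1
        ring
      rw [hdq, Real.mul_rpow (by positivity) (by positivity), hs2]
      field_simp
    have h2 : c * (π / (q / (2 * s ^ 2))) ^ ((n : ℝ) / 2) = (μ / (q : ℝ)) ^ ((n : ℝ) / 2) := by
      rw [hcdef, neg_div, Real.rpow_neg (by positivity), ← Real.inv_rpow (by positivity),
        ← Real.mul_rpow (by positivity) (by positivity), hμ]
      congr 1
      field_simp
    rw [← h1, ← h2, hK]
    ring
  rw [hH]
  simp only [hcalc]
  rw [integral_sub (hPint.1.const_mul _) (hFI1.const_mul _), integral_const_mul,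
    integral_const_mul, hPint.2, hFeq]
  simp only [integral_mul_const, (hPx _).2]
  simp only [mul_assoc K, hsum]
  rw [integral_const_mul, integral_const_mul, integral_finsetSum _ fun j _ => hInt3 j, ← hconst]
  ring
end

section
/- For every measurable function F : (ℝⁿ)^q → ℝ that is invariant under all permutations of its q vector arguments and for which the integrals below converge absolutely, one has ∫_{(ℝⁿ)^q} exp(−(1/2)Σ_{j=1}^q ‖z_j‖² + (1/(2q))Σ_{i,j=1}^q z_i·z_j) · (1/q)Σ_{k=1}^q exp(−(μ/2)‖z_k‖²) · F(z_1,…,z_q) dz_1⋯dz_q = ∫_{(ℝⁿ)^q} exp(−(1/2)Σ_{i,j=1}^q M_{ij} z_i·z_j) · F(z_1,…,z_q) dz_1⋯dz_q. -/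
open MeasureTheory Real Finset

/-- Lemma 2 of the paper.
For any permutation-invariant measurable `F : (ℝⁿ)^q → ℝ` (with absolutely convergent
integrals),
`∫ exp(−½Σ‖z_j‖² + (1/2q)Σ_{ij} z_i·z_j) (1/q)Σ_k exp(−μ‖z_k‖²/2) F dz
  = ∫ exp(−½ ẑᵀ M ẑ) F dz`,
where `M_{ij} = δ_{ij} − 1/q + μ δ_{iq} δ_{jq}`. -/
theorem permutation_symmetry_integral
    (q n : ℕ) (hq : 2 ≤ q) (hn : 1 ≤ n) (μ : ℝ) (hμ : 0 < μ)
    (M : Matrix (Fin q) (Fin q) ℝ)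
    (hM : ∀ i j : Fin q, M i j = (if i = j then (1 : ℝ) else 0) - 1 / (q : ℝ)
      + μ * (if (i : ℕ) + 1 = q then 1 else 0) * (if (j : ℕ) + 1 = q then 1 else 0))
    (F : (Fin q → Fin n → ℝ) → ℝ)
    (hFmeas : Measurable F)
    (hFsymm : ∀ (e : Equiv.Perm (Fin q)) (z : Fin q → Fin n → ℝ), F (z ∘ e) = F z)
    (hInt1 : Integrable (fun z : Fin q → Fin n → ℝ =>
      Real.exp (-(1 / 2) * ∑ j : Fin q, ∑ i, z j i ^ 2
          + (1 / (2 * (q : ℝ))) * ∑ a : Fin q, ∑ b : Fin q, ∑ i, z a i * z b i) *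
        ((1 / (q : ℝ)) * ∑ k : Fin q, Real.exp (-(μ / 2) * ∑ i, z k i ^ 2)) * F z))
    (hInt2 : Integrable (fun z : Fin q → Fin n → ℝ =>
      Real.exp (-(1 / 2) * ∑ a : Fin q, ∑ b : Fin q, M a b * ∑ i, z a i * z b i) * F z)) :
    (∫ z : Fin q → Fin n → ℝ,
      Real.exp (-(1 / 2) * ∑ j : Fin q, ∑ i, z j i ^ 2
          + (1 / (2 * (q : ℝ))) * ∑ a : Fin q, ∑ b : Fin q, ∑ i, z a i * z b i) *
        ((1 / (q : ℝ)) * ∑ k : Fin q, Real.exp (-(μ / 2) * ∑ i, z k i ^ 2)) * F z)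
    = ∫ z : Fin q → Fin n → ℝ,
        Real.exp (-(1 / 2) * ∑ a : Fin q, ∑ b : Fin q, M a b * ∑ i, z a i * z b i) * F z := by
  obtain ⟨l, hl⟩ : ∃ l : Fin q, (l : ℕ) + 1 = q := ⟨⟨q - 1, by omega⟩, by simp; omega⟩
  have hll : ∀ i : Fin q, ((i : ℕ) + 1 = q) ↔ i = l := by
    intro i
    rw [Fin.ext_iff]
    omega
  have hq0 : (q : ℝ) ≠ 0 := by
    have : q ≠ 0 := by omega
    exact_mod_cast this
  set A : (Fin q → Fin n → ℝ) → ℝ := fun z => -(1 / 2) * ∑ j : Fin q, ∑ i, z j i ^ 2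
          + (1 / (2 * (q : ℝ))) * ∑ a : Fin q, ∑ b : Fin q, ∑ i, z a i * z b i with hA
  set H : Fin q → (Fin q → Fin n → ℝ) → ℝ := fun k z =>
    Real.exp (A z) * Real.exp (-(μ / 2) * ∑ i, z k i ^ 2) * F z with hH
  have hexp : ∀ z : Fin q → Fin n → ℝ,
      -(1 / 2) * ∑ a : Fin q, ∑ b : Fin q, M a b * ∑ i, z a i * z b i
        = A z + -(μ / 2) * ∑ i, z l i ^ 2 := by
    intro z
    have h1 : ∀ a b : Fin q, M a b * ∑ i, z a i * z b i
        = (if a = b then ∑ i, z a i * z b i else 0) - 1 / (q : ℝ) * (∑ i, z a i * z b i)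
          + (if a = l then (if b = l then μ * ∑ i, z a i * z b i else 0) else 0) := by
      intro a b
      rw [hM]
      simp only [hll]
      split_ifs <;> ring
    simp only [h1, Finset.sum_add_distrib, Finset.sum_sub_distrib, ← Finset.mul_sum]
    simp [hA, pow_two]
    field_simp
    ring
  have h2 : (fun z : Fin q → Fin n → ℝ =>
      Real.exp (-(1 / 2) * ∑ a : Fin q, ∑ b : Fin q, M a b * ∑ i, z a i * z b i) * F z) = H l := by
    funext z
    rw [hexp, Real.exp_add]
  have hAsymm : ∀ (e : Equiv.Perm (Fin q)) (z : Fin q → Fin n → ℝ), A (z ∘ e) = A z := by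
    intro e z
    simp only [hA, Function.comp]
    rw [Equiv.sum_comp e (fun j => ∑ i, z j i ^ 2),
      Equiv.sum_comp e (fun a => ∑ b : Fin q, ∑ i, z a i * z (e b) i)]
    congr 2
    refine Finset.sum_congr rfl fun a _ => ?_
    exact Equiv.sum_comp e (fun b => ∑ i, z a i * z b i)
  have hmp : ∀ e : Equiv.Perm (Fin q), MeasurePreserving
      (MeasurableEquiv.piCongrLeft (fun _ : Fin q => Fin n → ℝ) e) :=
    fun e => volume_measurePreserving_piCongrLeft (fun _ : Fin q => Fin n → ℝ) e
  have hHk : ∀ k, H k = H l ∘ (MeasurableEquiv.piCongrLeft (fun _ : Fin q => Fin n → ℝ)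
      (Equiv.swap l k)) := by
    intro k
    funext z
    have : MeasurableEquiv.piCongrLeft (fun _ : Fin q => Fin n → ℝ) (Equiv.swap l k) z
        = z ∘ (Equiv.swap l k) := by
      funext i
      obtain ⟨j, rfl⟩ := (Equiv.swap l k).surjective i
      rw [MeasurableEquiv.piCongrLeft_apply_apply]
      simp
    simp only [Function.comp_apply, this]
    simp only [hH, hAsymm, hFsymm]
    simp
  rw [h2] at hInt2
  rw [h2]
  have hI : ∀ k, Integrable (H k) := by
    intro k
    rw [hHk]
    exact (hmp _).integrable_comp_of_integrable hInt2
  have hE : ∀ k, ∫ z, H k z = ∫ z, H l z := by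
    intro k
    rw [hHk]
    exact (hmp _).integral_comp' (H l)
  calc _ = ∫ z, (1 / (q : ℝ)) * ∑ k : Fin q, H k z := by
        congr 1
        funext z
        change Real.exp (A z) * _ * F z = _
        simp only [hH]
        rw [← Finset.sum_mul, ← Finset.mul_sum]
        ring
    _ = ∫ z, H l z := by
        rw [integral_const_mul, integral_finsetSum _ (fun k _ => hI k)]
        simp only [hE]
        simp [hq0]
end

section
/- The average differential entropy satisfies h(X|W) = (n/2)·ln(2πσ²) − (μ/q)^{n/2}·(2π)^{−qn/2}·∫_{(ℝⁿ)^q} exp(−(1/2)Σ_{i,j=1}^q M_{ij} z_i·z_j) · ln[(1/q)Σ_{l=1}^q exp(−(μ/2)‖z_l‖²)] dz_1⋯dz_q. -/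
open MeasureTheory Real Finset

lemma aec_gauss (n : ℕ) (b : ℝ) (hb : 0 < b) (c : Fin n → ℝ) :
    Integrable (fun u : Fin n → ℝ => Real.exp (-b * ∑ i, (u i - c i) ^ 2)) ∧
    ∫ u : Fin n → ℝ, Real.exp (-b * ∑ i, (u i - c i) ^ 2) = (π / b) ^ ((n : ℝ) / 2) := by
  have h1 : ∀ u : Fin n → ℝ, Real.exp (-b * ∑ i, (u i - c i) ^ 2)
      = ∏ i, (fun i t => Real.exp (-b * (t - c i) ^ 2)) i (u i) := by
    intro u
    rw [← Real.exp_sum, Finset.mul_sum]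
  rw [funext h1]
  constructor
  · refine Integrable.fintype_prod (μ := fun _ => volume)
      (f := fun i t => Real.exp (-b * (t - c i) ^ 2)) ?_
    intro i
    exact (integrable_exp_neg_mul_sq hb).comp_sub_right (c i)
  · rw [integral_fintype_prod_volume_eq_prod (fun i t => Real.exp (-b * (t - c i) ^ 2))]
    have : ∀ i, ∫ t : ℝ, Real.exp (-b * (t - c i) ^ 2) = √(π / b) := by
      intro i
      rw [integral_sub_right_eq_self (fun t => Real.exp (-b * t ^ 2)) (c i), integral_gaussian]
    simp only [this]
    rw [Finset.prod_const, Finset.card_univ, Fintype.card_fin, Real.sqrt_eq_rpow,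
      ← Real.rpow_mul_natCast (by positivity)]
    congr 1; ring

lemma aec_joint (q n : ℕ) (b : ℝ) (hb : 0 < b) (F : (Fin q → Fin n → ℝ) → ℝ) (hF : Integrable F) :
    Integrable (fun p : (Fin n → ℝ) × (Fin q → Fin n → ℝ) =>
      Real.exp (-b * ∑ i, (p.1 i - (1 / (q : ℝ)) * ∑ a, p.2 a i) ^ 2) * F p.2) ∧
    ∫ p : (Fin n → ℝ) × (Fin q → Fin n → ℝ),
      Real.exp (-b * ∑ i, (p.1 i - (1 / (q : ℝ)) * ∑ a, p.2 a i) ^ 2) * F p.2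
      = (π / b) ^ ((n : ℝ) / 2) * ∫ z, F z := by
  have hi : Integrable (fun p : (Fin n → ℝ) × (Fin q → Fin n → ℝ) =>
      Real.exp (-b * ∑ i, (p.1 i - (1 / (q : ℝ)) * ∑ a, p.2 a i) ^ 2) * F p.2) (volume.prod volume) := by
    have hm : AEStronglyMeasurable (fun p : (Fin n → ℝ) × (Fin q → Fin n → ℝ) =>
      Real.exp (-b * ∑ i, (p.1 i - (1 / (q : ℝ)) * ∑ a, p.2 a i) ^ 2) * F p.2) (volume.prod volume) := by
      apply AEStronglyMeasurable.mul
      · exact Continuous.aestronglyMeasurable (by fun_prop)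
      · exact hF.aestronglyMeasurable.comp_snd
    refine (integrable_prod_iff' hm).2 ⟨Filter.Eventually.of_forall fun z => ?_, ?_⟩
    · exact (aec_gauss n b hb (fun i => (1 / (q : ℝ)) * ∑ a, z a i)).1.mul_const (F z)
    · simp only [norm_mul, Real.norm_eq_abs, Real.abs_exp, integral_mul_const]
      have := fun z : Fin q → Fin n → ℝ => (aec_gauss n b hb (fun i => (1 / (q : ℝ)) * ∑ a, z a i)).2
      simp only [this]
      exact hF.abs.const_mul _
  refine ⟨hi, ?_⟩
  rw [Measure.volume_eq_prod, integral_prod_symm _ hi]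
  simp only [integral_mul_const]
  have := fun z : Fin q → Fin n → ℝ => (aec_gauss n b hb (fun i => (1 / (q : ℝ)) * ∑ a, z a i)).2
  simp only [this]
  rw [integral_const_mul]

lemma aec_shear (q n : ℕ) : MeasurePreserving
    (fun p : (Fin n → ℝ) × (Fin q → Fin n → ℝ) => (p.1, fun (j : Fin q) (i : Fin n) => p.1 i - p.2 j i))
    volume volume := by
  refine MeasurePreserving.skew_product (f := id)
    (g := fun (u : Fin n → ℝ) (v : Fin q → Fin n → ℝ) (j : Fin q) (i : Fin n) => u i - v j i)
    (MeasurePreserving.id _) ?_ ?_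
  · exact Continuous.measurable (by unfold Function.uncurry; fun_prop)
  · refine Filter.Eventually.of_forall fun u => ?_
    exact (Measure.measurePreserving_sub_left (volume : Measure (Fin q → Fin n → ℝ)) (fun _ => u)).map_eq

lemma aec_core (q n : ℕ) (hq : 2 ≤ q) (s : ℝ) (hs : 0 < s) (μ : ℝ) (k : Fin q)
    (L : (Fin q → Fin n → ℝ) → ℝ)
    (hF : Integrable (fun z : Fin q → Fin n → ℝ => Real.exp (-(1 / 2) *
      (∑ a, ∑ i, z a i ^ 2 - (1 / (q : ℝ)) * ∑ i, (∑ a, z a i) ^ 2 + μ * ∑ i, z k i ^ 2)) * L z)) :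
    Integrable (fun p : (Fin n → ℝ) × (Fin q → Fin n → ℝ) =>
      Real.exp (-(1 / 2) * ∑ a, ∑ i, (s⁻¹ * p.2 a i) ^ 2) *
      Real.exp (-(μ / 2) * ∑ i, (s⁻¹ * p.1 i - s⁻¹ * p.2 k i) ^ 2) *
      L (fun j i => s⁻¹ * p.1 i - s⁻¹ * p.2 j i)) ∧
    ∫ p : (Fin n → ℝ) × (Fin q → Fin n → ℝ),
      Real.exp (-(1 / 2) * ∑ a, ∑ i, (s⁻¹ * p.2 a i) ^ 2) *
      Real.exp (-(μ / 2) * ∑ i, (s⁻¹ * p.1 i - s⁻¹ * p.2 k i) ^ 2) *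
      L (fun j i => s⁻¹ * p.1 i - s⁻¹ * p.2 j i)
    = s ^ (n + q * n) * ((2 * π / q) ^ ((n : ℝ) / 2) *
      ∫ z : Fin q → Fin n → ℝ, Real.exp (-(1 / 2) *
      (∑ a, ∑ i, z a i ^ 2 - (1 / (q : ℝ)) * ∑ i, (∑ a, z a i) ^ 2 + μ * ∑ i, z k i ^ 2)) * L z) := by
  have hq0 : (0 : ℝ) < q := by exact_mod_cast (by omega : 0 < q)
  obtain ⟨h1, h2⟩ := aec_joint q n (q / 2) (by positivity) _ hF
  have hsh := aec_shear q n
  have h3 := hsh.integrable_comp_of_integrable h1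
  have h4 := integral_map hsh.measurable.aemeasurable (hsh.map_eq.symm ▸ h1.aestronglyMeasurable)
  rw [hsh.map_eq, h2] at h4
  have key : ∀ p : (Fin n → ℝ) × (Fin q → Fin n → ℝ),
      Real.exp (-((q : ℝ) / 2) * ∑ i, (p.1 i - (1 / (q : ℝ)) * ∑ a, (p.1 i - p.2 a i)) ^ 2) *
      (Real.exp (-(1 / 2) *
      (∑ a, ∑ i, (p.1 i - p.2 a i) ^ 2 - (1 / (q : ℝ)) * ∑ i, (∑ a, (p.1 i - p.2 a i)) ^ 2 +
        μ * ∑ i, (p.1 i - p.2 k i) ^ 2)) * L (fun j i => p.1 i - p.2 j i)) =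
      Real.exp (-(1 / 2) * ∑ a, ∑ i, (p.2 a i) ^ 2) *
      Real.exp (-(μ / 2) * ∑ i, (p.1 i - p.2 k i) ^ 2) *
      L (fun j i => p.1 i - p.2 j i) := by
    intro p
    rw [← mul_assoc, ← Real.exp_add, ← Real.exp_add]
    congr 2
    have e : ∀ i, ((q : ℝ)) * (p.1 i - (1 / (q : ℝ)) * ∑ a, (p.1 i - p.2 a i)) ^ 2
        + ∑ a, (p.1 i - p.2 a i) ^ 2 - (1 / (q : ℝ)) * (∑ a, (p.1 i - p.2 a i)) ^ 2
        = ∑ a, p.2 a i ^ 2 := by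
      intro i
      simp only [sub_sq, Finset.sum_sub_distrib, Finset.sum_add_distrib, Finset.sum_const,
        Finset.card_univ, Fintype.card_fin, nsmul_eq_mul, ← Finset.mul_sum]
      field_simp
      ring
    rw [Finset.sum_comm (f := fun a i => (p.1 i - p.2 a i) ^ 2),
      Finset.sum_comm (f := fun a i => (p.2 a i) ^ 2), ← Finset.sum_congr rfl (fun i _ => e i)]
    simp only [Finset.sum_sub_distrib, Finset.sum_add_distrib, ← Finset.mul_sum]
    ring
  simp only [Function.comp_def] at h3
  simp only [key] at h3 h4
  have i1 : (volume : Measure (Fin q → Fin n → ℝ)).IsAddHaarMeasure :=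
    Measure.pi.isAddHaarMeasure (fun _ : Fin q => (volume : Measure (Fin n → ℝ)))
  have i2 : (volume : Measure ((Fin n → ℝ) × (Fin q → Fin n → ℝ))).IsAddHaarMeasure :=
    Measure.prod.instIsAddHaarMeasure _ _
  have h5 := h3.comp_smul (R := s⁻¹) (by positivity)
  have h6 := Measure.integral_comp_smul (volume : Measure ((Fin n → ℝ) × (Fin q → Fin n → ℝ)))
    (fun p => Real.exp (-(1 / 2) * ∑ a, ∑ i, (p.2 a i) ^ 2) *
      Real.exp (-(μ / 2) * ∑ i, (p.1 i - p.2 k i) ^ 2) *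
      L (fun j i => p.1 i - p.2 j i)) s⁻¹
  simp only [Prod.smul_fst, Prod.smul_snd, Pi.smul_apply, smul_eq_mul] at h5 h6
  refine ⟨h5, h6.trans ?_⟩
  rw [← h4]
  have hfr : Module.finrank ℝ ((Fin n → ℝ) × (Fin q → Fin n → ℝ)) = n + q * n := by
    rw [Module.finrank_prod, Module.finrank_fintype_fun_eq_card, Module.finrank_pi_fintype]
    simp
  rw [hfr, inv_pow, inv_inv, abs_of_pos (by positivity)]
  congr 3
  field_simp

lemma aec_quad (q n : ℕ) (μ : ℝ) (M : Matrix (Fin q) (Fin q) ℝ)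
    (hM : ∀ i j : Fin q, M i j = (if i = j then (1 : ℝ) else 0) - 1 / (q : ℝ)
      + μ * (if (i : ℕ) + 1 = q then 1 else 0) * (if (j : ℕ) + 1 = q then 1 else 0))
    (k : Fin q) (hk : (k : ℕ) + 1 = q) (z : Fin q → Fin n → ℝ) :
    ∑ a : Fin q, ∑ b : Fin q, M a b * ∑ i, z a i * z b i =
      ∑ a, ∑ i, z a i ^ 2 - (1 / (q : ℝ)) * ∑ i, (∑ a, z a i) ^ 2 + μ * ∑ i, z k i ^ 2 := by
  have hk' : ∀ a : Fin q, ((a : ℕ) + 1 = q) = (a = k) := by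
    intro a; rw [Fin.ext_iff]; apply propext; omega
  have e : ∀ a b : Fin q, M a b * ∑ i, z a i * z b i =
      (if a = b then ∑ i, z a i * z b i else 0) - (1 / (q : ℝ)) * ∑ i, z a i * z b i
      + (if a = k then if b = k then μ * ∑ i, z a i * z b i else 0 else 0) := by
    intro a b
    rw [hM]; simp only [hk']
    split_ifs <;> ring
  simp only [e, Finset.sum_sub_distrib, Finset.sum_add_distrib, ← Finset.mul_sum]
  have e2 : ∑ a : Fin q, ∑ b : Fin q, ∑ i, z a i * z b i = ∑ i, (∑ a, z a i) ^ 2 := by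
    simp only [sq, Finset.sum_mul_sum]
    rw [Finset.sum_comm' (t' := univ) (s' := fun _ => univ) (by simp)]
    rw [Finset.sum_comm]
    conv_rhs => rw [Finset.sum_comm]
    apply Finset.sum_congr rfl; intro a _
    rw [Finset.sum_comm]
  rw [e2]
  congr 1
  · congr 1
    simp [sq]
  · simp [Finset.sum_ite_eq', sq]

lemma aec_perm (q n : ℕ) (μ : ℝ) (k k₀ : Fin q)
    (L : (Fin q → Fin n → ℝ) → ℝ) (hL : ∀ (e : Equiv.Perm (Fin q)) z, L (fun a => z (e a)) = L z)
    (hF : Integrable (fun z : Fin q → Fin n → ℝ => Real.exp (-(1 / 2) *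
      (∑ a, ∑ i, z a i ^ 2 - (1 / (q : ℝ)) * ∑ i, (∑ a, z a i) ^ 2 + μ * ∑ i, z k₀ i ^ 2)) * L z)) :
    Integrable (fun z : Fin q → Fin n → ℝ => Real.exp (-(1 / 2) *
      (∑ a, ∑ i, z a i ^ 2 - (1 / (q : ℝ)) * ∑ i, (∑ a, z a i) ^ 2 + μ * ∑ i, z k i ^ 2)) * L z) ∧
    ∫ z : Fin q → Fin n → ℝ, Real.exp (-(1 / 2) *
      (∑ a, ∑ i, z a i ^ 2 - (1 / (q : ℝ)) * ∑ i, (∑ a, z a i) ^ 2 + μ * ∑ i, z k i ^ 2)) * L z =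
    ∫ z : Fin q → Fin n → ℝ, Real.exp (-(1 / 2) *
      (∑ a, ∑ i, z a i ^ 2 - (1 / (q : ℝ)) * ∑ i, (∑ a, z a i) ^ 2 + μ * ∑ i, z k₀ i ^ 2)) * L z := by
  have hp := volume_measurePreserving_piCongrLeft (fun _ : Fin q => Fin n → ℝ) (Equiv.swap k k₀)
  have h1 := hp.integrable_comp_of_integrable hF
  have h2 := hp.integral_comp' (fun z : Fin q → Fin n → ℝ => Real.exp (-(1 / 2) *
      (∑ a, ∑ i, z a i ^ 2 - (1 / (q : ℝ)) * ∑ i, (∑ a, z a i) ^ 2 + μ * ∑ i, z k₀ i ^ 2)) * L z)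
  have hz : ∀ z : Fin q → Fin n → ℝ, MeasurableEquiv.piCongrLeft (fun _ : Fin q => Fin n → ℝ)
      (Equiv.swap k k₀) z = fun a => z (Equiv.swap k k₀ a) := by
    intro z; funext a
    obtain ⟨b, rfl⟩ := (Equiv.swap k k₀).surjective a
    rw [MeasurableEquiv.piCongrLeft_apply_apply, Equiv.swap_apply_self]
  have key : ∀ z : Fin q → Fin n → ℝ, Real.exp (-(1 / 2) *
      (∑ a, ∑ i, z (Equiv.swap k k₀ a) i ^ 2 - (1 / (q : ℝ)) * ∑ i, (∑ a, z (Equiv.swap k k₀ a) i) ^ 2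
        + μ * ∑ i, z (Equiv.swap k k₀ k₀) i ^ 2)) * L (fun a => z (Equiv.swap k k₀ a)) =
      Real.exp (-(1 / 2) *
      (∑ a, ∑ i, z a i ^ 2 - (1 / (q : ℝ)) * ∑ i, (∑ a, z a i) ^ 2 + μ * ∑ i, z k i ^ 2)) * L z := by
    intro z
    rw [hL, Equiv.swap_apply_right, Equiv.sum_comp (Equiv.swap k k₀) (fun a => ∑ i, z a i ^ 2)]
    simp only [fun i => Equiv.sum_comp (Equiv.swap k k₀) (fun a => z a i)]
  simp only [Function.comp_def, hz, key] at h1 h2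
  exact ⟨h1, h2⟩

lemma aec_norm (n : ℕ) (σ : ℝ) (hσ : 0 < σ) (c : Fin n → ℝ) :
    Integrable (fun x : Fin n → ℝ => (2 * π * σ ^ 2) ^ (-(n : ℝ) / 2) *
        Real.exp (-(∑ i, (x i - c i) ^ 2) / (2 * σ ^ 2))) ∧
    ∫ x : Fin n → ℝ, (2 * π * σ ^ 2) ^ (-(n : ℝ) / 2) *
        Real.exp (-(∑ i, (x i - c i) ^ 2) / (2 * σ ^ 2)) = 1 := by
  obtain ⟨h1, h2⟩ := aec_gauss n (1 / (2 * σ ^ 2)) (by positivity) c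
  have e : ∀ x : Fin n → ℝ, Real.exp (-(∑ i, (x i - c i) ^ 2) / (2 * σ ^ 2)) =
      Real.exp (-(1 / (2 * σ ^ 2)) * ∑ i, (x i - c i) ^ 2) := by
    intro x; congr 1; ring
  simp only [e]
  refine ⟨h1.const_mul _, ?_⟩
  rw [integral_const_mul, h2]
  have : π / (1 / (2 * σ ^ 2)) = 2 * π * σ ^ 2 := by field_simp
  rw [this, ← Real.rpow_add (by positivity), ← Real.rpow_zero (2 * π * σ ^ 2)]
  congr 1; ring

lemma aec_const (q n : ℕ) (hq : 2 ≤ q) (σ s : ℝ) (hσ : 0 < σ) (hs : 0 < s) :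
    (2 * π * σ ^ 2) ^ (-(n : ℝ) / 2) * ((2 * π * s ^ 2) ^ (-(n : ℝ) / 2)) ^ q *
      (s ^ (n + q * n) * (2 * π / q) ^ ((n : ℝ) / 2)) =
    (s ^ 2 / σ ^ 2 / (q : ℝ)) ^ ((n : ℝ) / 2) * (2 * π) ^ (-((q : ℝ) * (n : ℝ)) / 2) := by
  have hq0 : (0 : ℝ) < q := by exact_mod_cast (by omega : 0 < q)
  have hpi : (0 : ℝ) < 2 * π := by positivity
  have e1 : (2 * π) ^ (-((q : ℝ) * (n : ℝ)) / 2) = (((2 * π) ^ ((n : ℝ) / 2))⁻¹) ^ q := by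
    rw [← Real.rpow_neg hpi.le, ← Real.rpow_mul_natCast hpi.le]; congr 1; ring
  have e2 : s ^ n = (s ^ 2) ^ ((n : ℝ) / 2) := by
    rw [← Real.rpow_natCast s 2, ← Real.rpow_mul hs.le, ← Real.rpow_natCast]; congr 1
    push_cast; ring
  have e3 : s ^ (n + q * n) = s ^ n * (s ^ n) ^ q := by rw [pow_add, ← pow_mul, mul_comm q n]
  rw [e1, e3, e2, neg_div, Real.rpow_neg (by positivity), Real.rpow_neg (by positivity),
    Real.mul_rpow hpi.le (by positivity), Real.mul_rpow hpi.le (by positivity),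
    Real.div_rpow hpi.le hq0.le, Real.div_rpow (by positivity) hq0.le,
    Real.div_rpow (by positivity) (by positivity)]
  have a1 : 0 < (2 * π) ^ ((n : ℝ) / 2) := by positivity
  have a2 : 0 < (σ ^ 2) ^ ((n : ℝ) / 2) := by positivity
  have a3 : 0 < (s ^ 2) ^ ((n : ℝ) / 2) := by positivity
  have a4 : 0 < (q : ℝ) ^ ((n : ℝ) / 2) := by positivity
  generalize (2 * π) ^ ((n : ℝ) / 2) = A at *
  generalize (σ ^ 2) ^ ((n : ℝ) / 2) = B at *
  generalize (s ^ 2) ^ ((n : ℝ) / 2) = C at *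
  generalize (q : ℝ) ^ ((n : ℝ) / 2) = D at *
  simp only [inv_pow, mul_pow]
  field_simp

/-- Corollary 1 of the paper.
The average differential entropy equals
`(n/2)·ln(2πσ²) − (μ/q)^{n/2} (2π)^{−qn/2} ∫ exp(−½ ẑᵀ M ẑ) ln[(1/q)Σ_l exp(−μ‖z_l‖²/2)] dz`,
where `M_{ij} = δ_{ij} − 1/q + μ δ_{iq} δ_{jq}`. -/
theorem average_entropy_compact_form
    (q n : ℕ) (hq : 2 ≤ q) (hn : 1 ≤ n)
    (σ s : ℝ) (hσ : 0 < σ) (hs : 0 < s)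
    (μ : ℝ) (hμ : μ = s ^ 2 / σ ^ 2)
    (M : Matrix (Fin q) (Fin q) ℝ)
    (hM : ∀ i j : Fin q, M i j = (if i = j then (1 : ℝ) else 0) - 1 / (q : ℝ)
      + μ * (if (i : ℕ) + 1 = q then 1 else 0) * (if (j : ℕ) + 1 = q then 1 else 0))
    -- the Gaussian mixture density `f(x|w)`
    (f : (Fin q → Fin n → ℝ) → (Fin n → ℝ) → ℝ)
    (hf : ∀ w x, f w x =
      (1 / (q : ℝ)) * ∑ j : Fin q, (2 * π * σ ^ 2) ^ (-(n : ℝ) / 2) *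
        Real.exp (-(∑ i, (x i - w j i) ^ 2) / (2 * σ ^ 2)))
    -- the conditional differential entropy `h(X | W = w)`
    (hEnt : (Fin q → Fin n → ℝ) → ℝ)
    (hhEnt : ∀ w, hEnt w = -∫ x : Fin n → ℝ, f w x * Real.log (f w x))
    (hInt1 : ∀ w, Integrable (fun x : Fin n → ℝ => f w x * Real.log (f w x)))
    -- the average differential entropy `h(X|W)`
    (H : ℝ)
    (hH : H = ∫ w : Fin q → Fin n → ℝ,
      (∏ j : Fin q, (2 * π * s ^ 2) ^ (-(n : ℝ) / 2) *
        Real.exp (-(∑ i, w j i ^ 2) / (2 * s ^ 2))) * hEnt w)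
    (hInt2 : Integrable (fun w : Fin q → Fin n → ℝ =>
      (∏ j : Fin q, (2 * π * s ^ 2) ^ (-(n : ℝ) / 2) *
        Real.exp (-(∑ i, w j i ^ 2) / (2 * s ^ 2))) * hEnt w))
    (hInt3 : Integrable (fun z : Fin q → Fin n → ℝ =>
      Real.exp (-(1 / 2) * ∑ a : Fin q, ∑ b : Fin q, M a b * ∑ i, z a i * z b i) *
        Real.log ((1 / (q : ℝ)) * ∑ l : Fin q,
          Real.exp (-(μ / 2) * ∑ i, z l i ^ 2)))) :
    H = ((n : ℝ) / 2) * Real.log (2 * π * σ ^ 2)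
      - (μ / (q : ℝ)) ^ ((n : ℝ) / 2) * (2 * π) ^ (-((q : ℝ) * (n : ℝ)) / 2) *
        ∫ z : Fin q → Fin n → ℝ,
          Real.exp (-(1 / 2) * ∑ a : Fin q, ∑ b : Fin q, M a b * ∑ i, z a i * z b i) *
            Real.log ((1 / (q : ℝ)) * ∑ l : Fin q,
              Real.exp (-(μ / 2) * ∑ i, z l i ^ 2)) := by
  have hq0 : (0 : ℝ) < q := by exact_mod_cast (by omega : 0 < q)
  have hμ0 : 0 < μ := by rw [hμ]; positivity
  obtain ⟨k₀, hk₀⟩ : ∃ k₀ : Fin q, (k₀ : ℕ) + 1 = q := ⟨⟨q - 1, by omega⟩, by simp; omega⟩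
  simp only [aec_quad q n μ M hM k₀ hk₀] at hInt3 ⊢
  obtain ⟨L, hL⟩ : ∃ L : (Fin q → Fin n → ℝ) → ℝ, ∀ z, L z = Real.log ((1 / (q : ℝ)) *
    ∑ l : Fin q, Real.exp (-(μ / 2) * ∑ i, z l i ^ 2)) := ⟨_, fun _ => rfl⟩
  simp only [← hL] at hInt3 ⊢
  have hLs : ∀ (e : Equiv.Perm (Fin q)) z, L (fun a => z (e a)) = L z := by
    intro e z
    rw [hL, hL, Equiv.sum_comp e (fun l => Real.exp (-(μ / 2) * ∑ i, z l i ^ 2))]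
  have hk := fun k => aec_perm q n μ k k₀ L hLs hInt3
  have hcore := fun k => aec_core q n hq s hs μ k L (hk k).1
  simp only [fun k => (hk k).2] at hcore
  clear hk
  generalize (∫ z : Fin q → Fin n → ℝ, Real.exp (-(1 / 2) *
    (∑ a, ∑ i, z a i ^ 2 - (1 / (q : ℝ)) * ∑ i, (∑ a, z a i) ^ 2 + μ * ∑ i, z k₀ i ^ 2)) * L z)
    = I at hcore ⊢
  -- the density
  have hfi : ∀ w, Integrable (f w) := by
    intro w
    rw [funext (hf w)]
    exact (integrable_finsetSum _ fun j _ => (aec_norm n σ hσ (w j)).1).const_mul _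
  have hf1 : ∀ w, ∫ x, f w x = 1 := by
    intro w
    rw [funext (hf w), integral_const_mul,
      integral_finsetSum _ fun j _ => (aec_norm n σ hσ (w j)).1]
    simp only [fun j => (aec_norm n σ hσ (w j)).2]
    simp [hq0.ne']
  have hexp : ∀ (w : Fin q → Fin n → ℝ) (x : Fin n → ℝ) j,
      Real.exp (-(∑ i, (x i - w j i) ^ 2) / (2 * σ ^ 2)) =
      Real.exp (-(μ / 2) * ∑ i, (s⁻¹ * x i - s⁻¹ * w j i) ^ 2) := by
    intro w x j
    congr 1
    simp only [← mul_sub, mul_pow, ← Finset.mul_sum]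
    rw [hμ]; field_simp
  have hf' : ∀ w x, f w x = (2 * π * σ ^ 2) ^ (-(n : ℝ) / 2) * ((1 / (q : ℝ)) *
      ∑ j, Real.exp (-(μ / 2) * ∑ i, (s⁻¹ * x i - s⁻¹ * w j i) ^ 2)) := by
    intro w x
    rw [hf, ← Finset.mul_sum]; simp only [hexp]; ring
  have hlog : ∀ w x, Real.log (f w x) = -((n : ℝ) / 2 * Real.log (2 * π * σ ^ 2)) +
      L (fun j i => s⁻¹ * x i - s⁻¹ * w j i) := by
    intro w x
    have hne : Nonempty (Fin q) := ⟨k₀⟩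
    have hpos : 0 < ∑ j, Real.exp (-(μ / 2) * ∑ i, (s⁻¹ * x i - s⁻¹ * w j i) ^ 2) :=
      Finset.sum_pos (fun j _ => Real.exp_pos _) Finset.univ_nonempty
    rw [hf', Real.log_mul (by positivity) (by positivity), Real.log_rpow (by positivity), hL]
    ring
  have hEnt' : ∀ w, hEnt w = (n : ℝ) / 2 * Real.log (2 * π * σ ^ 2) -
      ∫ x, f w x * L (fun j i => s⁻¹ * x i - s⁻¹ * w j i) := by
    intro w
    have h1 := hInt1 w
    have h2 : ∀ x, f w x * L (fun j i => s⁻¹ * x i - s⁻¹ * w j i) =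
        f w x * Real.log (f w x) + (n : ℝ) / 2 * Real.log (2 * π * σ ^ 2) * f w x := by
      intro x; rw [hlog]; ring
    rw [hhEnt, funext h2, integral_add h1 ((hfi w).const_mul _), integral_const_mul, hf1]
    ring
  -- the prior
  have hprior : ∀ w : Fin q → Fin n → ℝ, (∏ j : Fin q, (2 * π * s ^ 2) ^ (-(n : ℝ) / 2) *
        Real.exp (-(∑ i, w j i ^ 2) / (2 * s ^ 2))) = ((2 * π * s ^ 2) ^ (-(n : ℝ) / 2)) ^ q *
      Real.exp (-(1 / 2) * ∑ a, ∑ i, (s⁻¹ * w a i) ^ 2) := by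
    intro w
    rw [Finset.prod_mul_distrib, Finset.prod_const, Finset.card_univ, Fintype.card_fin,
      ← Real.exp_sum, Finset.mul_sum]
    congr 3; funext a
    simp only [mul_pow, ← Finset.mul_sum]
    field_simp
  have hn0 := aec_norm n s hs 0
  simp only [Pi.zero_apply, sub_zero] at hn0
  have hPi : Integrable (fun w : Fin q → Fin n → ℝ =>
      (∏ j : Fin q, (2 * π * s ^ 2) ^ (-(n : ℝ) / 2) *
        Real.exp (-(∑ i, w j i ^ 2) / (2 * s ^ 2)))) :=
    Integrable.fintype_prod (μ := fun _ => volume) (f := fun (_ : Fin q) (v : Fin n → ℝ) =>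
      (2 * π * s ^ 2) ^ (-(n : ℝ) / 2) * Real.exp (-(∑ i, v i ^ 2) / (2 * s ^ 2))) (fun _ => hn0.1)
  have hP1 : ∫ w : Fin q → Fin n → ℝ,
      (∏ j : Fin q, (2 * π * s ^ 2) ^ (-(n : ℝ) / 2) *
        Real.exp (-(∑ i, w j i ^ 2) / (2 * s ^ 2))) = 1 := by
    rw [integral_fintype_prod_volume_eq_pow (fun (v : Fin n → ℝ) =>
      (2 * π * s ^ 2) ^ (-(n : ℝ) / 2) * Real.exp (-(∑ i, v i ^ 2) / (2 * s ^ 2))), hn0.2, one_pow]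
  -- the joint integrand
  obtain ⟨B, hB⟩ : ∃ B : (Fin n → ℝ) × (Fin q → Fin n → ℝ) → ℝ, ∀ p, B p =
      (2 * π * σ ^ 2) ^ (-(n : ℝ) / 2) * ((2 * π * s ^ 2) ^ (-(n : ℝ) / 2)) ^ q * (1 / (q : ℝ)) *
      ∑ k, Real.exp (-(1 / 2) * ∑ a, ∑ i, (s⁻¹ * p.2 a i) ^ 2) *
      Real.exp (-(μ / 2) * ∑ i, (s⁻¹ * p.1 i - s⁻¹ * p.2 k i) ^ 2) *
      L (fun j i => s⁻¹ * p.1 i - s⁻¹ * p.2 j i) := ⟨_, fun _ => rfl⟩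
  have hBi : Integrable B (volume.prod volume) := by
    rw [funext hB]
    exact (integrable_finsetSum _ fun k _ => (hcore k).1).const_mul _
  have hBint : ∫ p, B p ∂(volume.prod volume) = (μ / (q : ℝ)) ^ ((n : ℝ) / 2) *
      (2 * π) ^ (-((q : ℝ) * (n : ℝ)) / 2) * I := by
    rw [funext hB, ← Measure.volume_eq_prod, integral_const_mul,
      integral_finsetSum _ fun k _ => (hcore k).1]
    simp only [fun k => (hcore k).2]
    rw [hμ, ← aec_const q n hq σ s hσ hs]
    simp only [Finset.sum_const, Finset.card_univ, Fintype.card_fin, nsmul_eq_mul]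
    field_simp
  have hmain : ∀ w : Fin q → Fin n → ℝ, (∏ j : Fin q, (2 * π * s ^ 2) ^ (-(n : ℝ) / 2) *
        Real.exp (-(∑ i, w j i ^ 2) / (2 * s ^ 2))) * hEnt w =
      (n : ℝ) / 2 * Real.log (2 * π * σ ^ 2) * (∏ j : Fin q, (2 * π * s ^ 2) ^ (-(n : ℝ) / 2) *
        Real.exp (-(∑ i, w j i ^ 2) / (2 * s ^ 2))) - ∫ x, B (x, w) := by
    intro w
    rw [hEnt', mul_sub, mul_comm]
    congr 1
    rw [← integral_const_mul]
    congr 1; funext x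
    rw [hB, hprior, hf']
    simp only [← Finset.mul_sum, ← Finset.sum_mul]
    ring
  rw [hH, funext hmain, integral_sub (hPi.const_mul _) hBi.integral_prod_right,
    integral_const_mul, hP1, ← integral_prod_symm _ hBi, hBint, mul_one]
end

section
/- For j ∈ {1,2}, the vector β_j is an eigenvector of the matrix C^(q) with eigenvalue λ_j, i.e. C^(q)·β_j = λ_j·β_j. -/
open Real Finset

noncomputable section

/-- `λ_j = ((μ−1) + (−1)^{j+1}·√(μ²−(4/q−2)μ+1))/2` for `j ∈ {1,2}`. -/
def lamJ (q : ℕ) (μ : ℝ) (j : ℕ) : ℝ :=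
  ((μ - 1) + (-1 : ℝ) ^ (j + 1) * Real.sqrt (μ ^ 2 - (4 / (q : ℝ) - 2) * μ + 1)) / 2

/-- `m_j = λ_j + 1`. -/
def mJ (q : ℕ) (μ : ℝ) (j : ℕ) : ℝ := lamJ q μ j + 1

/-- `x_j = 1 − q·m_j`. -/
def xJ (q : ℕ) (μ : ℝ) (j : ℕ) : ℝ := 1 - (q : ℝ) * mJ q μ j

/-- `β_j ∈ ℝ^q`, with `β_{j,k} = (q−1+x_j²)^{−1/2}·(1 if k ≠ q; x_j if k = q)`
(indices `k` are 1-based in the paper, so `k = q` means the last coordinate). -/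
def betaVec (q : ℕ) (μ : ℝ) (j : ℕ) : Fin q → ℝ :=
  fun k => (Real.sqrt ((q : ℝ) - 1 + xJ q μ j ^ 2))⁻¹ *
    (if (k : ℕ) + 1 = q then xJ q μ j else 1)

/-- The matrix `C^(q)` with entries `C_{ij} = −1/q + μ·δ_{iq}δ_{jq}`. -/
def Cmat (q : ℕ) (μ : ℝ) : Matrix (Fin q) (Fin q) ℝ :=
  Matrix.of fun i j =>
    -(1 / (q : ℝ)) + if (i : ℕ) + 1 = q ∧ (j : ℕ) + 1 = q then μ else 0

/-- part of Theorem 2 of the paper.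
For `j ∈ {1,2}`, the vector `β_j` is an eigenvector of `C^(q)` with eigenvalue `λ_j`. -/
theorem beta_eigenvector_of_C
    (q : ℕ) (hq : 2 ≤ q) (μ : ℝ) (hμ : 0 < μ)
    (j : ℕ) (hj : j = 1 ∨ j = 2) :
    (Cmat q μ).mulVec (betaVec q μ j) = lamJ q μ j • betaVec q μ j := by
  have hq0 : (0 : ℝ) < q := by
    have : 0 < q := by omega
    exact_mod_cast this
  have hq1 : (1 : ℝ) ≤ q := by
    have : 1 ≤ q := by omega
    exact_mod_cast this
  have hD : 0 ≤ μ ^ 2 - (4 / (q : ℝ) - 2) * μ + 1 := by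
    have h1 : 1 / (q : ℝ) ≤ 1 := by
      rw [div_le_one hq0]; exact hq1
    have h2 : μ ^ 2 - (4 / (q : ℝ) - 2) * μ + 1
        = (μ - 1) ^ 2 + 4 * (μ * (1 - 1 / (q : ℝ))) := by ring
    rw [h2]
    have h3 : 0 ≤ μ * (1 - 1 / (q : ℝ)) := mul_nonneg hμ.le (by linarith)
    positivity
  have hs := Real.sq_sqrt hD
  have hquad : lamJ q μ j ^ 2 = (μ - 1) * lamJ q μ j + μ * (1 - 1 / (q : ℝ)) := by
    rcases hj with rfl | rfl
    all_goals
      unfold lamJ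
      norm_num
      ring_nf at hs ⊢
      linarith
  have hx : xJ q μ j = 1 - q - q * lamJ q μ j := by
    unfold xJ mJ; ring
  have hlast : lamJ q μ j + μ * xJ q μ j = lamJ q μ j * xJ q μ j := by
    rw [hx]
    have h4 : (q : ℝ) * lamJ q μ j ^ 2 = q * (μ - 1) * lamJ q μ j + μ * (q - 1) := by
      rw [hquad]; field_simp
    linear_combination h4
  unfold Cmat betaVec
  generalize (Real.sqrt ((q : ℝ) - 1 + xJ q μ j ^ 2))⁻¹ = N
  generalize xJ q μ j = x at *
  generalize lamJ q μ j = l at *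
  obtain ⟨n, rfl⟩ : ∃ n, q = n + 1 := ⟨q - 1, by omega⟩
  clear hs hD hquad
  have hne : ∀ i : Fin n, (i : ℕ) ≠ n := fun i => i.2.ne
  funext i
  simp only [Matrix.mulVec, dotProduct, Fin.sum_univ_castSucc, Matrix.of_apply, Pi.smul_apply,
    smul_eq_mul]
  push_cast at hx hq0 ⊢
  have hn : (n : ℝ) + 1 ≠ 0 := hq0.ne'
  by_cases hi : (i : ℕ) = n
  · simp [hi, hne]
    field_simp
    linear_combination N * ((n : ℝ) + 1) * hlast - N * hx
  · simp [hi, hne]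
    field_simp
    linear_combination - N * hx

end
end

section
/- The family of q vectors {α_1,…,α_{q−2}, β_1, β_2} is an orthonormal basis of ℝ^q; equivalently, the q×q matrix Λ^(q) whose columns are α_1,…,α_{q−2}, β_1, β_2 (in this order) satisfies (Λ^(q))ᵀ·Λ^(q) = I, i.e. Λ^(q) is orthogonal. -/
open Real Finset Matrix

noncomputable section

/-- `α_i ∈ ℝ^q` (1-based `i` and 1-based coordinate index as in the paper). -/
def alphaVec (q i : ℕ) : Fin q → ℝ :=
  fun k => (Real.sqrt ((i : ℝ) * ((i : ℝ) + 1)))⁻¹ *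
    (if (k : ℕ) + 1 < i + 1 then 1
     else if (k : ℕ) + 1 = i + 1 then -(i : ℝ)
     else 0)

/-- The matrix `Λ^(q)` whose columns are `α_1, …, α_{q−2}, β_1, β_2` in this order. -/
def LambdaMat (q : ℕ) (μ : ℝ) : Matrix (Fin q) (Fin q) ℝ :=
  Matrix.of fun k c =>
    if (c : ℕ) < q - 2 then alphaVec q ((c : ℕ) + 1) k
    else if (c : ℕ) = q - 2 then betaVec q μ 1 k
    else betaVec q μ 2 k

theorem aux_sum (g : ℕ → ℝ) (i n : ℕ) (h : i < n) :
    ∑ k ∈ Finset.range n, (if k + 1 < i + 1 then (1:ℝ) else if k + 1 = i + 1 then -(i : ℝ) else 0) * g k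
      = ∑ k ∈ Finset.range i, g k - i * g i := by
  induction n, h using Nat.le_induction with
  | base =>
    rw [Finset.sum_range_succ]
    have : ∀ k ∈ Finset.range i, (if k + 1 < i + 1 then (1:ℝ) else if k + 1 = i + 1 then -(i : ℝ) else 0) * g k = g k := by
      intro k hk
      have := Finset.mem_range.1 hk
      rw [if_pos (by omega), one_mul]
    rw [Finset.sum_congr rfl this]
    simp
    ring
  | succ n hn ih =>
    rw [Finset.sum_range_succ, ih, if_neg (by omega), if_neg (by omega)]
    simp

theorem alpha_sum (q i : ℕ) (g : ℕ → ℝ) (h : i < q) :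
    ∑ k : Fin q, alphaVec q i k * g k
      = (Real.sqrt ((i : ℝ) * ((i : ℝ) + 1)))⁻¹ * (∑ k ∈ Finset.range i, g k - i * g i) := by
  rw [← aux_sum g i q h, Finset.mul_sum, Finset.sum_range]
  refine Finset.sum_congr rfl fun k _ => ?_
  simp only [alphaVec]
  ring

theorem alpha_const (q i : ℕ) (g : ℕ → ℝ) (h : i < q) (c : ℝ) (hg : ∀ k ≤ i, g k = c) :
    ∑ k : Fin q, alphaVec q i k * g k = 0 := by
  rw [alpha_sum q i g h, Finset.sum_congr rfl (g := fun _ => c), hg i le_rfl]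
  · simp
  · intro k hk
    exact hg k (Finset.mem_range.1 hk).le

theorem alpha_alpha_lt (q i j : ℕ) (hij : i < j) (h : i < q) :
    ∑ k : Fin q, alphaVec q i k * alphaVec q j k = 0 := by
  refine alpha_const q i (fun k => (Real.sqrt ((j : ℝ) * ((j : ℝ) + 1)))⁻¹ *
    (if k + 1 < j + 1 then 1 else if k + 1 = j + 1 then -(j : ℝ) else 0)) h
    (Real.sqrt ((j : ℝ) * ((j : ℝ) + 1)))⁻¹ ?_
  intro k hk
  rw [if_pos (by omega), mul_one]

theorem alpha_self (q i : ℕ) (hi : 1 ≤ i) (h : i < q) :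
    ∑ k : Fin q, alphaVec q i k * alphaVec q i k = 1 := by
  have hi' : (0:ℝ) < i := by exact_mod_cast hi
  have key := alpha_sum q i (fun k => (Real.sqrt ((i : ℝ) * ((i : ℝ) + 1)))⁻¹ *
    (if k + 1 < i + 1 then 1 else if k + 1 = i + 1 then -(i : ℝ) else 0)) h
  refine key.trans ?_
  have e : ∀ k ∈ Finset.range i, (Real.sqrt ((i : ℝ) * ((i : ℝ) + 1)))⁻¹ *
    (if k + 1 < i + 1 then 1 else if k + 1 = i + 1 then -(i : ℝ) else 0)
      = (Real.sqrt ((i : ℝ) * ((i : ℝ) + 1)))⁻¹ := by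
    intro k hk
    have := Finset.mem_range.1 hk
    rw [if_pos (by omega), mul_one]
  rw [Finset.sum_congr rfl e]
  have hp : (0:ℝ) < i * (i + 1) := by positivity
  have hs := Real.sq_sqrt hp.le
  have hs0 := Real.sqrt_pos.2 hp
  simp only [lt_irrefl, if_false, if_true, Finset.sum_const, Finset.card_range, nsmul_eq_mul]
  generalize Real.sqrt ((i : ℝ) * ((i : ℝ) + 1)) = s at *
  field_simp
  nlinarith

theorem alpha_beta (q i : ℕ) (μ : ℝ) (j : ℕ) (h : i + 1 < q) :
    ∑ k : Fin q, alphaVec q i k * betaVec q μ j k = 0 := by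
  refine alpha_const q i (fun k => (Real.sqrt ((q : ℝ) - 1 + xJ q μ j ^ 2))⁻¹ *
    (if k + 1 = q then xJ q μ j else 1)) (by omega)
    (Real.sqrt ((q : ℝ) - 1 + xJ q μ j ^ 2))⁻¹ ?_
  intro k hk
  rw [if_neg (by omega), mul_one]

theorem beta_sum (q : ℕ) (hq : 2 ≤ q) (μ : ℝ) (i j : ℕ) :
    ∑ k : Fin q, betaVec q μ i k * betaVec q μ j k =
      (Real.sqrt ((q : ℝ) - 1 + xJ q μ i ^ 2))⁻¹ * (Real.sqrt ((q : ℝ) - 1 + xJ q μ j ^ 2))⁻¹ *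
        ((q : ℝ) - 1 + xJ q μ i * xJ q μ j) := by
  obtain ⟨n, rfl⟩ : ∃ n, q = n + 1 := ⟨q - 1, by omega⟩
  rw [Fin.sum_univ_castSucc]
  have e : ∀ k : Fin n, ((k : ℕ) + 1 = n + 1) = False := by
    intro k
    have := k.2
    simp only [eq_iff_iff, iff_false]
    omega
  simp only [betaVec, Fin.val_castSucc, e, Fin.val_last, if_true, if_false, Finset.sum_const,
    Finset.card_univ, Fintype.card_fin, nsmul_eq_mul]
  push_cast
  ring

theorem beta_self (q : ℕ) (hq : 2 ≤ q) (μ : ℝ) (j : ℕ) :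
    ∑ k : Fin q, betaVec q μ j k * betaVec q μ j k = 1 := by
  rw [beta_sum q hq]
  have hq' : (2:ℝ) ≤ q := by exact_mod_cast hq
  have hp : (0:ℝ) < (q : ℝ) - 1 + xJ q μ j ^ 2 := by nlinarith [sq_nonneg (xJ q μ j)]
  have hs := Real.sq_sqrt hp.le
  have hs0 := Real.sqrt_pos.2 hp
  rw [← mul_inv, ← sq, ← sq, hs]
  exact inv_mul_cancel₀ hp.ne'

theorem beta_cross (q : ℕ) (hq : 2 ≤ q) (μ : ℝ) (hμ : 0 < μ) :
    ∑ k : Fin q, betaVec q μ 1 k * betaVec q μ 2 k = 0 := by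
  rw [beta_sum q hq]
  have hq' : (2:ℝ) ≤ q := by exact_mod_cast hq
  have h4 : 4 / (q : ℝ) ≤ 2 := by
    rw [div_le_iff₀ (by linarith)]
    linarith
  have hp : (0:ℝ) ≤ μ ^ 2 - (4 / (q : ℝ) - 2) * μ + 1 := by
    nlinarith [sq_nonneg μ, mul_nonneg (sub_nonneg.2 h4) hμ.le]
  have hs := Real.sq_sqrt hp
  have h0 : (q : ℝ) - 1 + xJ q μ 1 * xJ q μ 2 = 0 := by
    have hc : (q : ℝ) * (4 / q) = 4 := by field_simp
    simp only [xJ, mJ, lamJ]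
    generalize Real.sqrt (μ ^ 2 - (4 / (q : ℝ) - 2) * μ + 1) = s at *
    linear_combination (-(q : ℝ) ^ 2 / 4) * hs + (q * μ / 4) * hc
  rw [h0, mul_zero]

/-- part of Theorem 2 of the paper.
The family `{α_1, …, α_{q−2}, β_1, β_2}` is an orthonormal basis of `ℝ^q`;
equivalently the matrix `Λ^(q)` with these columns satisfies `(Λ^(q))ᵀ·Λ^(q) = 1`,
i.e. `Λ^(q)` is orthogonal. -/
theorem Lambda_orthogonal
    (q : ℕ) (hq : 2 ≤ q) (μ : ℝ) (hμ : 0 < μ) :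
    (LambdaMat q μ)ᵀ * LambdaMat q μ = 1 := by
  ext a b
  have ha := a.2
  have hb := b.2
  simp only [Matrix.mul_apply, Matrix.transpose_apply, LambdaMat, Matrix.of_apply, Matrix.one_apply,
    Fin.ext_iff]
  split_ifs <;> first
    | omega
    | exact beta_self q hq μ _
    | exact beta_cross q hq μ hμ
    | exact alpha_beta q _ μ _ (by omega)
    | (simp only [mul_comm (betaVec _ _ 2 _)]; exact beta_cross q hq μ hμ)
    | (simp only [mul_comm (betaVec _ _ _ _)]; exact alpha_beta q _ μ _ (by omega))
    | (rename_i h; rw [h]; exact alpha_self q _ (by omega) (by omega))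
    | (rename_i h
       rcases lt_or_gt_of_ne h with h | h
       · exact alpha_alpha_lt q _ _ (by omega) (by omega)
       · rw [Finset.sum_congr rfl fun k _ => mul_comm _ _]
         exact alpha_alpha_lt q _ _ (by omega) (by omega))

end
end

section
/- The average differential entropy satisfies h(X|W) = n·ln(σ√(2πe)) + (n/2)·(q/(q−1))·μ + S, where S = −E_u[ ln( (1/q)·Σ_{l=1}^q exp(−(μ/2)·(G_l + 2δ_{ql}T)) ) ]. -/
open MeasureTheory ProbabilityTheory Real Finset

noncomputable section

/-- `α_{m,l}` extended by `0` for `m ∈ {q−1, q}`, as a function of the (1-based)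
eigenvector index `m` (encoded as `m : Fin q`) and the component index `l : Fin q`. -/
def omegaVec (q : ℕ) (l : Fin q) : Fin q → ℝ :=
  fun m => if (m : ℕ) < q - 2 then alphaVec q ((m : ℕ) + 1) l else 0

/-- `d_k = 1` for `k ≤ q−2`, `d_{q−1} = m_1`, `d_q = m_2` (1-based `k`). -/
def dCoef (q : ℕ) (μ : ℝ) (k : Fin q) : ℝ :=
  if (k : ℕ) < q - 2 then 1
  else if (k : ℕ) = q - 2 then mJ q μ 1
  else mJ q μ 2

/-- The law of `u = (u_{k,i})` with independent centered Gaussian components,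
`u_{k,i}` having variance `d_k⁻¹`. -/
def measU (q n : ℕ) (μ : ℝ) : Measure (Fin q → Fin n → ℝ) :=
  Measure.pi fun k : Fin q =>
    Measure.pi fun _ : Fin n => gaussianReal 0 (Real.toNNReal (dCoef q μ k)⁻¹)
open scoped NNReal ENNReal

lemma pi_withDensity_aux {ι : Type*} [Fintype ι] {E : ι → Type*}
    {mE : ∀ i, MeasurableSpace (E i)} (ν : (i : ι) → Measure (E i)) [∀ i, SigmaFinite (ν i)]
    (g : (i : ι) → E i → ℝ) (hg0 : ∀ i x, 0 ≤ g i x) (hgi : ∀ i, Integrable (g i) (ν i))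
    [∀ i, SigmaFinite ((ν i).withDensity (fun x => ENNReal.ofReal (g i x)))] :
    Measure.pi (fun i => (ν i).withDensity (fun x => ENNReal.ofReal (g i x)))
      = (Measure.pi ν).withDensity (fun x => ENNReal.ofReal (∏ i, g i (x i))) := by
  apply Measure.pi_eq
  intro s hs
  rw [withDensity_apply _ (MeasurableSet.univ_pi hs), Measure.restrict_pi_pi,
    ← ofReal_integral_eq_lintegral_ofReal, integral_fintype_prod_eq_prod,
    ENNReal.ofReal_prod_of_nonneg]
  · refine Finset.prod_congr rfl fun i _ => ?_
    rw [withDensity_apply _ (hs i), ofReal_integral_eq_lintegral_ofReal (hgi i).integrableOn]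
    exact Filter.Eventually.of_forall (hg0 i)
  · intro i _
    exact integral_nonneg (hg0 i)
  · exact Integrable.fintype_prod_dep fun i => (hgi i).integrableOn
  · exact Filter.Eventually.of_forall fun x => Finset.prod_nonneg fun i _ => hg0 i _

lemma gaussN_eq (n : ℕ) (t : ℝ) (ht : 0 < t) :
    Measure.pi (fun _ : Fin n => gaussianReal 0 (Real.toNNReal (t ^ 2)))
      = (volume : Measure (Fin n → ℝ)).withDensity (fun x => ENNReal.ofReal
        ((2 * π * t ^ 2) ^ (-(n : ℝ) / 2) * Real.exp (-(∑ i, x i ^ 2) / (2 * t ^ 2)))) := by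
  have ht2 : 0 < t ^ 2 := by positivity
  have hne : Real.toNNReal (t ^ 2) ≠ 0 := by
    simpa using ht.ne'
  have hv : ((Real.toNNReal (t ^ 2) : ℝ≥0) : ℝ) = t ^ 2 := Real.coe_toNNReal _ ht2.le
  have h1 : gaussianReal 0 (Real.toNNReal (t ^ 2)) = (volume : Measure ℝ).withDensity
      (fun x => ENNReal.ofReal (gaussianPDFReal 0 (Real.toNNReal (t ^ 2)) x)) := by
    rw [gaussianReal_of_var_ne_zero _ hne]; rfl
  have : SigmaFinite ((volume : Measure ℝ).withDensity
      (fun x => ENNReal.ofReal (gaussianPDFReal 0 (Real.toNNReal (t ^ 2)) x))) := by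
    rw [← h1]; infer_instance
  rw [h1, pi_withDensity_aux (fun _ : Fin n => (volume : Measure ℝ))
    (fun _ x => gaussianPDFReal 0 (Real.toNNReal (t ^ 2)) x)
    (fun _ _ => gaussianPDFReal_nonneg _ _ _) (fun _ => integrable_gaussianPDFReal _ _)]
  congr 1
  ext x
  congr 1
  simp only [gaussianPDFReal, hv, Finset.prod_mul_distrib, Finset.prod_const, Finset.card_univ,
    Fintype.card_fin, sub_zero]
  rw [← Real.exp_sum]
  congr 1
  · rw [Real.sqrt_eq_rpow, ← Real.rpow_neg (by positivity), ← Real.rpow_natCast,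
      ← Real.rpow_mul (by positivity)]
    congr 1; ring
  · rw [← Finset.sum_div, Finset.sum_neg_distrib]

lemma integrable_dens (n : ℕ) (t : ℝ) (ht : 0 < t) :
    Integrable (fun x : Fin n → ℝ =>
        ((2 * π * t ^ 2) ^ (-(n : ℝ) / 2) * Real.exp (-(∑ i, x i ^ 2) / (2 * t ^ 2)))) := by
  have h := gaussN_eq n t ht
  have h2 : IsProbabilityMeasure ((volume : Measure (Fin n → ℝ)).withDensity (fun x => ENNReal.ofReal
        ((2 * π * t ^ 2) ^ (-(n : ℝ) / 2) * Real.exp (-(∑ i, x i ^ 2) / (2 * t ^ 2))))) := by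
    rw [← h]; infer_instance
  have h3 := h2.measure_univ
  rw [withDensity_apply _ MeasurableSet.univ, Measure.restrict_univ] at h3
  refine ⟨(by fun_prop : Continuous _).aestronglyMeasurable, ?_⟩
  rw [hasFiniteIntegral_iff_ofReal (Filter.Eventually.of_forall fun x => by positivity), h3]
  simp

lemma integral_gaussN (n : ℕ) (t : ℝ) (ht : 0 < t) (g : (Fin n → ℝ) → ℝ) :
    ∫ x : Fin n → ℝ, ((2 * π * t ^ 2) ^ (-(n : ℝ) / 2) *
        Real.exp (-(∑ i, x i ^ 2) / (2 * t ^ 2))) * g x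
      = ∫ x, g x ∂(Measure.pi (fun _ : Fin n => gaussianReal 0 (Real.toNNReal (t ^ 2)))) := by
  rw [gaussN_eq n t ht, integral_withDensity_eq_integral_toReal_smul (by fun_prop)
    (Filter.Eventually.of_forall fun x => by simp)]
  refine integral_congr_ae (Filter.Eventually.of_forall fun x => ?_)
  simp only [smul_eq_mul]
  rw [ENNReal.toReal_ofReal (by positivity)]

lemma integrable_gaussN_iff (n : ℕ) (t : ℝ) (ht : 0 < t) (g : (Fin n → ℝ) → ℝ) :
    Integrable (fun x : Fin n → ℝ => ((2 * π * t ^ 2) ^ (-(n : ℝ) / 2) *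
        Real.exp (-(∑ i, x i ^ 2) / (2 * t ^ 2))) * g x)
      ↔ Integrable g (Measure.pi (fun _ : Fin n => gaussianReal 0 (Real.toNNReal (t ^ 2)))) := by
  rw [gaussN_eq n t ht, integrable_withDensity_iff_integrable_smul' (by fun_prop)
    (Filter.Eventually.of_forall fun x => by simp)]
  refine integrable_congr (Filter.Eventually.of_forall fun x => ?_)
  simp only [smul_eq_mul]
  rw [ENNReal.toReal_ofReal (by positivity)]

lemma integral_gaussQN (q n : ℕ) (t : ℝ) (ht : 0 < t) (g : (Fin q → Fin n → ℝ) → ℝ) :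
    ∫ w : Fin q → Fin n → ℝ, (∏ j, (2 * π * t ^ 2) ^ (-(n : ℝ) / 2) *
        Real.exp (-(∑ i, w j i ^ 2) / (2 * t ^ 2))) * g w
      = ∫ w, g w ∂(Measure.pi fun _ : Fin q =>
          Measure.pi (fun _ : Fin n => gaussianReal 0 (Real.toNNReal (t ^ 2)))) := by
  have h1 := gaussN_eq n t ht
  have : SigmaFinite ((volume : Measure (Fin n → ℝ)).withDensity (fun x => ENNReal.ofReal
        ((2 * π * t ^ 2) ^ (-(n : ℝ) / 2) * Real.exp (-(∑ i, x i ^ 2) / (2 * t ^ 2))))) := by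
    rw [← h1]; infer_instance
  rw [h1, pi_withDensity_aux (fun _ : Fin q => (volume : Measure (Fin n → ℝ)))
    (fun _ x => (2 * π * t ^ 2) ^ (-(n : ℝ) / 2) * Real.exp (-(∑ i, x i ^ 2) / (2 * t ^ 2)))
    (fun _ _ => by positivity) (fun _ => integrable_dens n t ht),
    integral_withDensity_eq_integral_toReal_smul (by fun_prop)
    (Filter.Eventually.of_forall fun x => by simp)]
  refine integral_congr_ae (Filter.Eventually.of_forall fun x => ?_)
  simp only [smul_eq_mul]
  rw [ENNReal.toReal_ofReal (by positivity)]

lemma alpha_sum0 (i N : ℕ) (h : i < N) :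
    ∑ l ∈ Finset.range N, (if l + 1 < i + 1 then (1:ℝ) else if l + 1 = i + 1 then -(i:ℝ) else 0)
      = 0 := by
  induction N, h using Nat.le_induction with
  | base =>
    rw [Finset.sum_range_succ, Finset.sum_congr rfl (g := fun _ => (1:ℝ))]
    · simp
    · intro x hx
      have := Finset.mem_range.1 hx
      simp [this]
  | succ N hN ih =>
    rw [Finset.sum_range_succ, ih]
    have h1 : ¬ (N + 1 < i + 1) := by omega
    have h2 : ¬ (N + 1 = i + 1) := by omega
    rw [if_neg h1, if_neg h2, add_zero]

lemma alpha_sumsq (i N : ℕ) (h : i < N) :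
    ∑ l ∈ Finset.range N,
      (if l + 1 < i + 1 then (1:ℝ) else if l + 1 = i + 1 then -(i:ℝ) else 0) ^ 2
      = (i:ℝ) * (i + 1) := by
  induction N, h using Nat.le_induction with
  | base =>
    rw [Finset.sum_range_succ, Finset.sum_congr rfl (g := fun _ => (1:ℝ))]
    · simp; ring
    · intro x hx
      have := Finset.mem_range.1 hx
      simp [this]
  | succ N hN ih =>
    rw [Finset.sum_range_succ, ih]
    have h1 : ¬ (N + 1 < i + 1) := by omega
    have h2 : ¬ (N + 1 = i + 1) := by omega
    rw [if_neg h1, if_neg h2]; ring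

lemma alphaVec_sum (q i : ℕ) (h : i < q) : ∑ l, alphaVec q i l = 0 := by
  unfold alphaVec
  rw [← Finset.mul_sum, Fin.sum_univ_eq_sum_range
    (fun l => if l + 1 < i + 1 then (1:ℝ) else if l + 1 = i + 1 then -(i:ℝ) else 0),
    alpha_sum0 i q h, mul_zero]

lemma alphaVec_sq (q i : ℕ) (hi : 0 < i) (h : i < q) :
    ∑ l, alphaVec q i l * alphaVec q i l = 1 := by
  unfold alphaVec
  have hi' : (0:ℝ) < (i:ℝ) * (i + 1) := by positivity
  have : ∀ a b : ℝ, a * b * (a * b) = a ^ 2 * b ^ 2 := fun a b => by ring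
  simp_rw [this]
  rw [← Finset.mul_sum, Fin.sum_univ_eq_sum_range
    (fun l => (if l + 1 < i + 1 then (1:ℝ) else if l + 1 = i + 1 then -(i:ℝ) else 0) ^ 2),
    alpha_sumsq i q h, inv_pow, Real.sq_sqrt hi'.le, inv_mul_cancel₀ hi'.ne']

lemma alphaVec_orth (q i j : ℕ) (hij : i < j) (h : j < q) :
    ∑ l, alphaVec q i l * alphaVec q j l = 0 := by
  have : ∀ l, alphaVec q i l * alphaVec q j l
      = (Real.sqrt ((j : ℝ) * ((j : ℝ) + 1)))⁻¹ * alphaVec q i l := by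
    intro l
    unfold alphaVec
    by_cases h1 : (l:ℕ) + 1 < i + 1
    · have h2 : (l:ℕ) + 1 < j + 1 := by omega
      rw [if_pos h1, if_pos h2]; ring
    · by_cases h2 : (l:ℕ) + 1 = i + 1
      · have h3 : (l:ℕ) + 1 < j + 1 := by omega
        rw [if_neg h1, if_pos h2, if_pos h3]; ring
      · rw [if_neg h1, if_neg h2]; ring
  simp_rw [this]
  rw [← Finset.mul_sum, alphaVec_sum q i (by omega), mul_zero]

lemma alphaVec_last (q i : ℕ) (l : Fin q) (hl : (l:ℕ) + 1 = q) (h : i + 1 < q) :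
    alphaVec q i l = 0 := by
  unfold alphaVec
  rw [if_neg (by omega), if_neg (by omega), mul_zero]

/-- the normalising constants -/
def cJ (q : ℕ) (μ : ℝ) (j : ℕ) : ℝ := (Real.sqrt ((q : ℝ) - 1 + xJ q μ j ^ 2))⁻¹

/-- the orthogonal eigenvector matrix -/
def eMat (q : ℕ) (μ : ℝ) : Matrix (Fin q) (Fin q) ℝ := fun k l =>
  if (k : ℕ) < q - 2 then alphaVec q ((k : ℕ) + 1) l
  else if (k : ℕ) = q - 2 then cJ q μ 1 * (if (l : ℕ) + 1 = q then xJ q μ 1 else 1)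
  else cJ q μ 2 * (if (l : ℕ) + 1 = q then xJ q μ 2 else 1)

section alg
variable (q : ℕ) (μ : ℝ)

lemma disc_pos (hq : 2 ≤ q) (hμ : 0 < μ) : 0 < μ ^ 2 - (4 / (q : ℝ) - 2) * μ + 1 := by
  have hq' : (2:ℝ) ≤ q := by exact_mod_cast hq
  have : (4:ℝ) / q ≤ 2 := by rw [div_le_iff₀ (by linarith)]; linarith
  nlinarith

lemma m_add : mJ q μ 1 + mJ q μ 2 = 1 + μ := by
  unfold mJ lamJ; ring

lemma m_mul (hq : 2 ≤ q) (hμ : 0 < μ) : mJ q μ 1 * mJ q μ 2 = μ / q := by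
  have h := Real.sq_sqrt (disc_pos q μ hq hμ).le
  unfold mJ lamJ
  linear_combination (-1/4) * h

lemma m_pos (hq : 2 ≤ q) (hμ : 0 < μ) : 0 < mJ q μ 1 ∧ 0 < mJ q μ 2 := by
  have h1 := m_add q μ
  have h2 := m_mul q μ hq hμ
  have hq' : (2:ℝ) ≤ q := by exact_mod_cast hq
  have h3 : 0 < mJ q μ 1 * mJ q μ 2 := by rw [h2]; positivity
  rcases mul_pos_iff.1 h3 with h | h
  · exact h
  · linarith [h.1, h.2]

lemma x_mul (hq : 2 ≤ q) (hμ : 0 < μ) : xJ q μ 1 * xJ q μ 2 = 1 - q := by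
  have h1 := m_add q μ
  have h2 := m_mul q μ hq hμ
  have hq' : (2:ℝ) ≤ q := by exact_mod_cast hq
  have hq0 : (q:ℝ) ≠ 0 := by linarith
  rw [eq_div_iff hq0] at h2
  unfold xJ
  linear_combination (-(q:ℝ)) * h1 + q * h2

lemma c_sq (hq : 2 ≤ q) (j : ℕ) : cJ q μ j ^ 2 * ((q : ℝ) - 1 + xJ q μ j ^ 2) = 1 := by
  have hq' : (2:ℝ) ≤ q := by exact_mod_cast hq
  have h : 0 < (q : ℝ) - 1 + xJ q μ j ^ 2 := by nlinarith [sq_nonneg (xJ q μ j)]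
  unfold cJ
  rw [inv_pow, Real.sq_sqrt h.le, inv_mul_cancel₀ h.ne']
end alg

lemma sum_last (p : ℕ) (a b : ℝ) :
    ∑ l : Fin (p+2), (if (l : ℕ) + 1 = p + 2 then a else b) = (p+1) * b + a := by
  rw [Fin.sum_univ_castSucc]
  have : ∀ l : Fin (p+1), ¬ ((l.castSucc : Fin (p+2)) : ℕ) + 1 = p + 2 := by
    intro l; have := l.2; simp; omega
  simp only [if_neg (this _)]
  simp

lemma eMat_sum (q : ℕ) (hq : 2 ≤ q) (μ : ℝ) (k : Fin q) :
    ∑ l, eMat q μ k l = if (k : ℕ) < q - 2 then 0 else if (k:ℕ) = q - 2 then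
      cJ q μ 1 * ((q:ℝ) - 1 + xJ q μ 1) else cJ q μ 2 * ((q:ℝ) - 1 + xJ q μ 2) := by
  obtain ⟨p, rfl⟩ : ∃ p, q = p + 2 := ⟨q - 2, by omega⟩
  unfold eMat
  split_ifs with h1 h2
  · exact alphaVec_sum _ _ (by omega)
  · rw [← Finset.mul_sum, sum_last]; push_cast; ring
  · rw [← Finset.mul_sum, sum_last]; push_cast; ring

lemma sum_alpha_e (p i : ℕ) (hi : i < p) (a b : ℝ) :
    ∑ l, alphaVec (p+2) (i+1) l * (a * (if (l : ℕ) + 1 = p + 2 then b else 1)) = 0 := by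
  have : ∀ l, alphaVec (p+2) (i+1) l * (a * (if (l : ℕ) + 1 = p + 2 then b else 1))
      = a * alphaVec (p+2) (i+1) l := by
    intro l
    split_ifs with h
    · rw [alphaVec_last _ _ l h (by omega)]; ring
    · ring
  simp_rw [this]
  rw [← Finset.mul_sum, alphaVec_sum _ _ (by omega), mul_zero]

lemma sum_e_e (p : ℕ) (a b a' b' : ℝ) :
    ∑ l : Fin (p+2), (a * (if (l : ℕ) + 1 = p + 2 then b else 1)) *
      (a' * (if (l : ℕ) + 1 = p + 2 then b' else 1)) = a * a' * (p + 1 + b * b') := by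
  have : ∀ l : Fin (p+2), (a * (if (l : ℕ) + 1 = p + 2 then b else 1)) *
      (a' * (if (l : ℕ) + 1 = p + 2 then b' else 1))
      = if (l : ℕ) + 1 = p + 2 then a * a' * (b * b') else a * a' := by
    intro l; split_ifs <;> ring
  simp_rw [this]
  rw [sum_last]; ring

lemma eMat_orth (q : ℕ) (hq : 2 ≤ q) (μ : ℝ) (hμ : 0 < μ) : eMat q μ * (eMat q μ).transpose = 1 := by
  have hx := x_mul q μ hq hμ
  have hc1 := c_sq q μ hq 1
  have hc2 := c_sq q μ hq 2
  obtain ⟨p, rfl⟩ : ∃ p, q = p + 2 := ⟨q - 2, by omega⟩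
  push_cast at hx hc1 hc2
  ext k k'
  rw [Matrix.mul_apply]
  simp only [Matrix.transpose_apply]
  have hk := k.2
  have hk' := k'.2
  by_cases h1 : (k:ℕ) < p + 2 - 2
  · by_cases h2 : (k':ℕ) < p + 2 - 2
    · simp only [eMat, if_pos h1, if_pos h2]
      rcases lt_trichotomy (k:ℕ) (k':ℕ) with h | h | h
      · rw [alphaVec_orth _ _ _ (by omega) (by omega), Matrix.one_apply_ne]
        intro h'; rw [h'] at h; omega
      · have : k = k' := Fin.ext h
        subst this
        rw [alphaVec_sq _ _ (by omega) (by omega), Matrix.one_apply_eq]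
      · simp_rw [mul_comm (alphaVec (p+2) ((k:ℕ)+1) _)]
        rw [alphaVec_orth _ _ _ (by omega) (by omega), Matrix.one_apply_ne]
        intro h'; rw [h'] at h; omega
    · rw [Matrix.one_apply_ne (by intro h'; rw [h'] at h1; omega)]
      simp only [eMat, if_pos h1, if_neg h2]
      split_ifs
      all_goals exact sum_alpha_e p k (by omega) _ _
  · by_cases h2 : (k':ℕ) < p + 2 - 2
    · rw [Matrix.one_apply_ne (by intro h'; rw [h'] at h1; omega)]
      simp only [eMat, if_neg h1, if_pos h2]
      simp_rw [mul_comm _ (alphaVec _ _ _)]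
      split_ifs
      all_goals exact sum_alpha_e p k' (by omega) _ _
    · simp only [eMat, if_neg h1, if_neg h2]
      by_cases h3 : (k:ℕ) = p + 2 - 2
      · by_cases h4 : (k':ℕ) = p + 2 - 2
        · have : k = k' := Fin.ext (by omega)
          subst this
          simp only [if_pos h3, sum_e_e, Matrix.one_apply_eq]
          linear_combination hc1
        · rw [Matrix.one_apply_ne (by intro h'; rw [h'] at h3; omega)]
          simp only [if_pos h3, if_neg h4, sum_e_e]
          linear_combination (cJ (p+2) μ 1 * cJ (p+2) μ 2) * hx
      · by_cases h4 : (k':ℕ) = p + 2 - 2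
        · rw [Matrix.one_apply_ne (by intro h'; rw [h'] at h3; omega)]
          simp only [if_neg h3, if_pos h4, sum_e_e]
          linear_combination (cJ (p+2) μ 1 * cJ (p+2) μ 2) * hx
        · have : k = k' := Fin.ext (by omega)
          subst this
          simp only [if_neg h3, sum_e_e, Matrix.one_apply_eq]
          linear_combination hc2

lemma alg_diag (q μ m c : ℝ) (hμ : 0 < μ) (hm : 0 < m)
    (hR : q * m ^ 2 - q * (1 + μ) * m + μ = 0)
    (hc : c ^ 2 * (q - 1 + (1 - q * m) ^ 2) = 1) :
    (c * (q - 1 + (1 - q * m))) ^ 2 * (1 + 1 / μ)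
      - 2 * (c * (q - 1 + (1 - q * m))) * (c * (1 - q * m)) + 1 = m⁻¹ := by
  have h : (q - 1 + (1 - q * m)) ^ 2 * (1 + 1 / μ) - 2 * (q - 1 + (1 - q * m)) * (1 - q * m)
     = (m⁻¹ - 1) * (q - 1 + (1 - q * m) ^ 2) := by
    field_simp
    linear_combination (-(q*(1-m)))*hR
  linear_combination c ^ 2 * h + (m⁻¹ - 1) * hc

lemma alg_cross (q μ m m' : ℝ) (hμ : 0 < μ)
    (ha : m + m' = 1 + μ) (hm : q * (m * m') = μ) :
    (q - 1 + (1 - q * m)) * (q - 1 + (1 - q * m')) * (1 + 1 / μ)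
      - (q - 1 + (1 - q * m)) * (1 - q * m') - (q - 1 + (1 - q * m')) * (1 - q * m) = 0 := by
  have h1 : (q - 1 + (1 - q * m)) * (q - 1 + (1 - q * m')) = q * μ * (1 - q) := by
    linear_combination (-q^2) * ha + q * hm
  have h2 : (q - 1 + (1 - q * m)) * (1 - q * m') + (q - 1 + (1 - q * m')) * (1 - q * m)
      = q * (1 + μ) * (1 - q) := by
    linear_combination (-q*(1+q)) * ha + 2 * q * hm
  have h3 : μ * (1 / μ) = 1 := by field_simp
  rw [h1]
  linear_combination -h2 + q * (1 - q) * h3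

/-- The key quadratic form identity. -/
lemma eMat_quad (q : ℕ) (hq : 2 ≤ q) (μ : ℝ) (hμ : 0 < μ) (b : Fin q → ℝ) :
    ∑ k, (dCoef q μ k)⁻¹ * (∑ l, eMat q μ k l * b l) ^ 2
      = (∑ l, b l) ^ 2 * (1 + 1 / μ) - 2 * (∑ l, b l) * b ⟨q - 1, by omega⟩ + ∑ l, b l ^ 2 := by
  have hE := eMat_orth q hq μ hμ
  have hE' : (eMat q μ).transpose * eMat q μ = 1 := mul_eq_one_comm.1 hE
  set a : Fin q → ℝ := fun k => ∑ l, eMat q μ k l * b l with ha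
  have hb : ∀ l, b l = ∑ k, a k * eMat q μ k l := by
    intro l
    have h1 : (eMat q μ).transpose.mulVec ((eMat q μ).mulVec b) = b := by
      rw [Matrix.mulVec_mulVec, hE', Matrix.one_mulVec]
    have h2 := congrFun h1 l
    rw [← h2]
    simp only [Matrix.mulVec, dotProduct, Matrix.transpose_apply, ha]
    exact Finset.sum_congr rfl fun k _ => mul_comm _ _
  have hsq : ∑ l, b l ^ 2 = ∑ k, a k ^ 2 := by
    have h1 : dotProduct ((eMat q μ).mulVec b) ((eMat q μ).mulVec b) = dotProduct b b := by
      rw [Matrix.dotProduct_mulVec, ← Matrix.mulVec_transpose, Matrix.mulVec_mulVec, hE',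
        Matrix.one_mulVec]
    simp only [dotProduct, Matrix.mulVec] at h1
    simp only [pow_two, ha]
    exact h1.symm
  have hB : ∑ l, b l = ∑ k, a k * ∑ l, eMat q μ k l := by
    simp_rw [Finset.mul_sum]
    rw [Finset.sum_comm]
    exact Finset.sum_congr rfl fun l _ => hb l
  have hbl := hb ⟨q - 1, by omega⟩
  change ∑ k, (dCoef q μ k)⁻¹ * a k ^ 2 = _
  rw [hB, hbl, hsq]
  simp_rw [eMat_sum q hq]
  clear_value a
  clear hB hbl hsq hb hE hE'
  have hma := m_add q μ
  have hmm := m_mul q μ hq hμ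
  have hmp := m_pos q μ hq hμ
  have hc1 := c_sq q μ hq 1
  have hc2 := c_sq q μ hq 2
  have hq' : (2:ℝ) ≤ q := by exact_mod_cast hq
  have hq0 : (q:ℝ) ≠ 0 := by linarith
  rw [eq_div_iff hq0] at hmm
  simp only [xJ] at hc1 hc2
  have e1 := alg_diag q μ _ _ hμ hmp.1 (by linear_combination ((q:ℝ) * mJ q μ 1) * hma - hmm) hc1
  have e2 := alg_diag q μ _ _ hμ hmp.2 (by linear_combination ((q:ℝ) * mJ q μ 2) * hma - hmm) hc2
  have e3 := alg_cross q μ _ _ hμ hma (by linear_combination hmm)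
  obtain ⟨p, rfl⟩ : ∃ p, q = p + 2 := ⟨q - 2, by omega⟩
  rw [Fin.sum_univ_castSucc, Fin.sum_univ_castSucc, Fin.sum_univ_castSucc, Fin.sum_univ_castSucc,
    Fin.sum_univ_castSucc, Fin.sum_univ_castSucc, Fin.sum_univ_castSucc, Fin.sum_univ_castSucc]
  have hp : ∀ k : Fin p, (k:ℕ) < p := fun k => k.2
  have hal : ∀ k : Fin p, alphaVec (p+2) (k+1) ⟨p + 1, by omega⟩ = 0 := fun k =>
    alphaVec_last _ _ _ rfl (by have := k.2; omega)
  simp only [dCoef, eMat, Fin.val_castSucc, Fin.val_last, Nat.add_sub_cancel, if_true, hp,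
    lt_irrefl, if_false, hal, mul_zero, Finset.sum_const_zero, zero_add,
    show ¬ (p + 1 < p) by omega, show ¬ (p + 1 = p) by omega, show p + 2 - 1 = p + 1 by omega,
    inv_one, one_mul, show p + 1 + 1 = p + 2 from rfl, xJ]
  generalize a (Fin.last p).castSucc = a1
  generalize a (Fin.last (p+1)) = a2
  linear_combination (-a1^2) * e1 - a2^2 * e2 - 2 * a1 * a2 * cJ (p+2) μ 1 * cJ (p+2) μ 2 * e3
lemma char1 (v : ℝ≥0) (b : ℝ) :
    ∫ x, Complex.exp ((b * x : ℝ) * Complex.I) ∂(gaussianReal 0 v)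
      = Complex.exp ((-(v * b ^ 2) / 2 : ℝ)) := by
  have h := charFun_gaussianReal (μ := 0) (v := v) b
  rw [charFun_apply_real] at h
  push_cast
  rw [h]
  congr 1
  push_cast
  ring

lemma charN (n : ℕ) (v : ℝ≥0) (b : Fin n → ℝ) :
    ∫ x, Complex.exp ((∑ i, b i * x i : ℝ) * Complex.I) ∂(Measure.pi fun _ : Fin n => gaussianReal 0 v)
      = Complex.exp ((-(∑ i, v * b i ^ 2) / 2 : ℝ)) := by
  simp_rw [Complex.ofReal_sum, Finset.sum_mul, Complex.exp_sum]
  rw [integral_fintype_prod_eq_prod (fun i x => Complex.exp ((b i * x : ℝ) * Complex.I))]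
  simp_rw [char1]
  rw [← Complex.exp_sum, ← Complex.ofReal_sum, ← Finset.sum_div, Finset.sum_neg_distrib]

lemma charQN (q n : ℕ) (v : Fin q → ℝ≥0) (b : Fin q → Fin n → ℝ) :
    ∫ u, Complex.exp ((∑ k, ∑ i, b k i * u k i : ℝ) * Complex.I)
        ∂(Measure.pi fun k : Fin q => Measure.pi fun _ : Fin n => gaussianReal 0 (v k))
      = Complex.exp ((-(∑ k, ∑ i, v k * b k i ^ 2) / 2 : ℝ)) := by
  simp_rw [Complex.ofReal_sum (s := Finset.univ (α := Fin q)), Finset.sum_mul, Complex.exp_sum]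
  rw [integral_fintype_prod_eq_prod
    (fun k (x : Fin n → ℝ) => Complex.exp ((∑ i, b k i * x i : ℝ) * Complex.I))]
  simp_rw [charN]
  rw [← Complex.exp_sum, ← Complex.ofReal_sum, ← Finset.sum_div, Finset.sum_neg_distrib]

/-- the rotation -/
def rotU (q n : ℕ) (μ : ℝ) (u : Fin q → Fin n → ℝ) : Fin q → Fin n → ℝ :=
  fun l i => ∑ k, eMat q μ k l * u k i

/-- normalized differences -/
def diffV (q n : ℕ) (hq : 2 ≤ q) (s : ℝ) (z : (Fin q → Fin n → ℝ) × (Fin n → ℝ)) :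
    Fin q → Fin n → ℝ :=
  fun l i => (z.1 ⟨q - 1, by omega⟩ i + z.2 i - z.1 l i) / s

lemma continuous_rotU (q n : ℕ) (μ : ℝ) : Continuous (rotU q n μ) := by
  unfold rotU; fun_prop

lemma continuous_diffV (q n : ℕ) (hq : 2 ≤ q) (s : ℝ) : Continuous (diffV q n hq s) := by
  unfold diffV; fun_prop

lemma dual_apply (q n : ℕ) (L : StrongDual ℝ (Fin q → Fin n → ℝ)) (z : Fin q → Fin n → ℝ) :
    L z = ∑ l, ∑ i, L (Pi.single l (Pi.single i 1)) * z l i := by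
  conv_lhs => rw [← Finset.univ_sum_single z]
  rw [map_sum]
  refine Finset.sum_congr rfl fun l _ => ?_
  have : z l = ∑ i, z l i • (Pi.single i (1:ℝ) : Fin n → ℝ) := by
    ext j; simp [Finset.sum_apply, Pi.single_apply]
  conv_lhs => rw [this, ← LinearMap.single_apply (R := ℝ) (φ := fun _ : Fin q => Fin n → ℝ),
    map_sum, map_sum]
  refine Finset.sum_congr rfl fun i _ => ?_
  rw [map_smul, map_smul, smul_eq_mul, mul_comm, LinearMap.single_apply]

instance instProbMeasU (q n : ℕ) (μ : ℝ) : IsProbabilityMeasure (measU q n μ) := by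
  unfold measU; infer_instance

/-- law of `w` -/
def measW (q n : ℕ) (s : ℝ) : Measure (Fin q → Fin n → ℝ) :=
  Measure.pi fun _ : Fin q => Measure.pi fun _ : Fin n => gaussianReal 0 (Real.toNNReal (s ^ 2))

/-- law of the noise -/
def measY (n : ℕ) (σ : ℝ) : Measure (Fin n → ℝ) :=
  Measure.pi fun _ : Fin n => gaussianReal 0 (Real.toNNReal (σ ^ 2))

instance instProbMeasW (q n : ℕ) (s : ℝ) : IsProbabilityMeasure (measW q n s) := by
  unfold measW; infer_instance

instance instProbMeasY (n : ℕ) (s : ℝ) : IsProbabilityMeasure (measY n s) := by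
  unfold measY; infer_instance

lemma d_pos (q : ℕ) (hq : 2 ≤ q) (μ : ℝ) (hμ : 0 < μ) (k : Fin q) : 0 < dCoef q μ k := by
  unfold dCoef
  have := m_pos q μ hq hμ
  split_ifs
  exacts [one_pos, this.1, this.2]

lemma law_eq (q n : ℕ) (hq : 2 ≤ q) (σ s : ℝ) (hσ : 0 < σ) (hs : 0 < s)
    (μ : ℝ) (hμ : μ = s ^ 2 / σ ^ 2) :
    ((measW q n s).prod (measY n σ)).map (diffV q n hq s) = (measU q n μ).map (rotU q n μ) := by
  have hμ0 : 0 < μ := by rw [hμ]; positivity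
  have m1 := (continuous_diffV q n hq s).measurable
  have m2 := (continuous_rotU q n μ).measurable
  have : IsProbabilityMeasure (((measW q n s).prod (measY n σ)).map (diffV q n hq s)) :=
    Measure.isProbabilityMeasure_map m1.aemeasurable
  have : IsProbabilityMeasure ((measU q n μ).map (rotU q n μ)) :=
    Measure.isProbabilityMeasure_map m2.aemeasurable
  apply Measure.ext_of_charFunDual
  ext L
  rw [charFunDual_apply, charFunDual_apply,
    integral_map m1.aemeasurable (by fun_prop), integral_map m2.aemeasurable (by fun_prop)]
  set b : Fin q → Fin n → ℝ := fun l i => L (Pi.single l (Pi.single i 1)) with hb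
  set last : Fin q := ⟨q - 1, by omega⟩ with hlast
  set B : Fin n → ℝ := fun i => ∑ l, b l i with hB
  have hR : ∀ u, L (rotU q n μ u) = ∑ k, ∑ i, (∑ l, eMat q μ k l * b l i) * u k i := by
    intro u
    rw [dual_apply]
    change ∑ l, ∑ i, b l i * ∑ k, eMat q μ k l * u k i = _
    simp_rw [Finset.mul_sum, Finset.sum_mul]
    have : ∀ l, ∑ i, ∑ k, b l i * (eMat q μ k l * u k i)
        = ∑ k, ∑ i, eMat q μ k l * b l i * u k i := by
      intro l
      rw [Finset.sum_comm]
      exact Finset.sum_congr rfl fun k _ => Finset.sum_congr rfl fun i _ => by ring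
    simp_rw [this]
    rw [Finset.sum_comm]
    exact Finset.sum_congr rfl fun k _ => Finset.sum_comm
  have hV : ∀ z, L (diffV q n hq s z) =
      ∑ l, ∑ i, (((if l = last then B i else 0) - b l i) / s) * z.1 l i
        + ∑ i, (B i / s) * z.2 i := by
    intro z
    rw [dual_apply]
    change ∑ l, ∑ i, b l i * ((z.1 last i + z.2 i - z.1 l i) / s) = _
    have h1 : ∀ l, ∑ i, (((if l = last then B i else 0) - b l i) / s) * z.1 l i
        = (if l = last then ∑ i, B i / s * z.1 l i else 0) - ∑ i, b l i / s * z.1 l i := by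
      intro l
      split_ifs
      · rw [← Finset.sum_sub_distrib]
        exact Finset.sum_congr rfl fun i _ => by ring
      · rw [zero_sub, ← Finset.sum_neg_distrib]
        exact Finset.sum_congr rfl fun i _ => by ring
    simp_rw [h1]
    rw [Finset.sum_sub_distrib, Finset.sum_ite_eq' Finset.univ last, if_pos (Finset.mem_univ _)]
    have h2 : ∀ g : Fin n → ℝ, ∑ i, B i / s * g i = ∑ l, ∑ i, b l i / s * g i := by
      intro g
      rw [Finset.sum_comm]
      refine Finset.sum_congr rfl fun i _ => ?_
      rw [← Finset.sum_mul, ← Finset.sum_div]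
    rw [h2, h2, ← Finset.sum_sub_distrib, ← Finset.sum_add_distrib]
    refine Finset.sum_congr rfl fun l _ => ?_
    rw [← Finset.sum_sub_distrib, ← Finset.sum_add_distrib]
    exact Finset.sum_congr rfl fun i _ => by ring
  simp_rw [hR, hV, Complex.ofReal_add, add_mul, Complex.exp_add]
  rw [integral_prod_mul (f := fun w : Fin q → Fin n → ℝ => Complex.exp
    ((∑ l, ∑ i, (((if l = last then B i else 0) - b l i) / s) * w l i : ℝ) * Complex.I))
    (g := fun y : Fin n → ℝ => Complex.exp ((∑ i, (B i / s) * y i : ℝ) * Complex.I))]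
  unfold measW measY measU
  rw [charQN, charQN, charN, ← Complex.exp_add, ← Complex.ofReal_add]
  congr 2
  have hs2 : ((Real.toNNReal (s ^ 2) : ℝ≥0) : ℝ) = s ^ 2 := Real.coe_toNNReal _ (by positivity)
  have hσ2 : ((Real.toNNReal (σ ^ 2) : ℝ≥0) : ℝ) = σ ^ 2 := Real.coe_toNNReal _ (by positivity)
  have hd : ∀ k, ((Real.toNNReal (dCoef q μ k)⁻¹ : ℝ≥0) : ℝ) = (dCoef q μ k)⁻¹ := fun k =>
    Real.coe_toNNReal _ (inv_nonneg.2 (d_pos q hq μ hμ0 k).le)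
  simp_rw [hs2, hσ2, hd]
  rw [Finset.sum_comm (γ := Fin q), Finset.sum_comm (γ := Fin q)]
  simp_rw [eMat_quad q hq μ hμ0]
  rw [← add_div, ← neg_add, ← Finset.sum_add_distrib]
  congr 2
  refine Finset.sum_congr rfl fun i _ => ?_
  have h3 : ∀ l, s ^ 2 * (((if l = last then B i else 0) - b l i) / s) ^ 2
      = (if l = last then B i ^ 2 - 2 * B i * b l i else 0) + b l i ^ 2 := by
    intro l
    split_ifs <;> field_simp <;> ring
  simp_rw [h3]
  rw [Finset.sum_add_distrib, Finset.sum_ite_eq' Finset.univ last, if_pos (Finset.mem_univ _)]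
  have h4 : σ ^ 2 * (B i / s) ^ 2 = B i ^ 2 * (1 / μ) := by
    rw [hμ]; field_simp
  rw [h4]
  change _ = B i ^ 2 * (1 + 1 / μ) - 2 * B i * b last i + _
  ring

/-- normalising constant -/
def cN (n : ℕ) (σ : ℝ) : ℝ := (2 * π * σ ^ 2) ^ (-(n : ℝ) / 2)

/-- mixture density -/
def fMix (q n : ℕ) (σ : ℝ) (w : Fin q → Fin n → ℝ) (x : Fin n → ℝ) : ℝ :=
  (1 / (q : ℝ)) * ∑ j : Fin q, cN n σ *
        Real.exp (-(∑ i, (x i - w j i) ^ 2) / (2 * σ ^ 2))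

lemma cN_pos (n : ℕ) (σ : ℝ) (hσ : 0 < σ) : 0 < cN n σ := by
  unfold cN; positivity

lemma fMix_pos (q n : ℕ) (hq : 2 ≤ q) (σ : ℝ) (hσ : 0 < σ) (w x) : 0 < fMix q n σ w x := by
  have := cN_pos n σ hσ
  have hq0 : (0:ℝ) < q := by exact_mod_cast (by omega : 0 < q)
  unfold fMix
  have : Nonempty (Fin q) := ⟨⟨0, by omega⟩⟩
  have : 0 < ∑ j : Fin q, cN n σ * Real.exp (-(∑ i, (x i - w j i) ^ 2) / (2 * σ ^ 2)) :=
    Finset.sum_pos (fun j _ => by positivity) Finset.univ_nonempty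
  positivity

lemma log_fMix_bound (q n : ℕ) (hq : 2 ≤ q) (σ : ℝ) (hσ : 0 < σ) (w : Fin q → Fin n → ℝ)
    (j : Fin q) (y : Fin n → ℝ) :
    |Real.log (fMix q n σ w (fun i => w j i + y i))|
      ≤ (|Real.log (cN n σ)| + Real.log q) + (∑ i, y i ^ 2) / (2 * σ ^ 2) := by
  have hc := cN_pos n σ hσ
  have hq0 : (0:ℝ) < q := by exact_mod_cast (by omega : 0 < q)
  have hq1 : (1:ℝ) ≤ q := by exact_mod_cast (by omega : 1 ≤ q)
  have hlq : 0 ≤ Real.log q := Real.log_nonneg hq1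
  have hY : 0 ≤ (∑ i, y i ^ 2) / (2 * σ ^ 2) :=
    div_nonneg (Finset.sum_nonneg fun i _ => sq_nonneg _) (by positivity)
  have hf := fMix_pos q n hq σ hσ w (fun i => w j i + y i)
  have hup : fMix q n σ w (fun i => w j i + y i) ≤ cN n σ := by
    unfold fMix
    have : ∑ l : Fin q, cN n σ * Real.exp (-(∑ i, (w j i + y i - w l i) ^ 2) / (2 * σ ^ 2))
        ≤ ∑ l : Fin q, cN n σ := by
      refine Finset.sum_le_sum fun l _ => ?_
      have : Real.exp (-(∑ i, (w j i + y i - w l i) ^ 2) / (2 * σ ^ 2)) ≤ 1 := by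
        rw [Real.exp_le_one_iff, neg_div, neg_nonpos]
        exact div_nonneg (Finset.sum_nonneg fun i _ => sq_nonneg _) (by positivity)
      nlinarith
    rw [Finset.sum_const, Finset.card_univ, Fintype.card_fin, nsmul_eq_mul] at this
    rw [one_div, inv_mul_le_iff₀ hq0]
    exact this
  have hlo : (q:ℝ)⁻¹ * (cN n σ * Real.exp (-((∑ i, y i ^ 2) / (2 * σ ^ 2))))
      ≤ fMix q n σ w (fun i => w j i + y i) := by
    unfold fMix
    rw [one_div]
    refine mul_le_mul_of_nonneg_left ?_ (by positivity)
    have := Finset.single_le_sum (s := Finset.univ) (f := fun l : Fin q =>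
      cN n σ * Real.exp (-(∑ i, (w j i + y i - w l i) ^ 2) / (2 * σ ^ 2)))
      (fun l _ => by positivity) (Finset.mem_univ j)
    refine le_trans (le_of_eq ?_) this
    simp [neg_div]
  have h1 := Real.log_le_log hf hup
  have h2 := Real.log_le_log (by positivity) hlo
  rw [Real.log_mul (by positivity) (by positivity), Real.log_mul (by positivity) (by positivity),
    Real.log_exp, Real.log_inv] at h2
  rw [abs_le]
  constructor
  · linarith [neg_abs_le (Real.log (cN n σ))]
  · linarith [le_abs_self (Real.log (cN n σ))]

lemma integrable_sq_measY (n : ℕ) (σ : ℝ) (i : Fin n) :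
    Integrable (fun y : Fin n → ℝ => y i ^ 2) (measY n σ) := by
  have h : MeasurePreserving (Function.eval i) (measY n σ) (gaussianReal 0 (Real.toNNReal (σ ^ 2))) :=
    measurePreserving_eval _ i
  have h2 : Integrable (fun x : ℝ => x ^ 2) (gaussianReal 0 (Real.toNNReal (σ ^ 2))) :=
    (memLp_id_gaussianReal' 2 (by simp)).integrable_sq
  exact h.integrable_comp_of_integrable h2

lemma integrable_bound (n : ℕ) (σ C : ℝ) :
    Integrable (fun y : Fin n → ℝ => C + (∑ i, y i ^ 2) / (2 * σ ^ 2)) (measY n σ) :=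
  (integrable_const _).add ((integrable_finsetSum _ fun i _ => integrable_sq_measY n σ i).div_const _)

lemma integrable_log_y (q n : ℕ) (hq : 2 ≤ q) (σ : ℝ) (hσ : 0 < σ) (w : Fin q → Fin n → ℝ)
    (j : Fin q) :
    Integrable (fun y : Fin n → ℝ => Real.log (fMix q n σ w (fun i => w j i + y i)))
      (measY n σ) := by
  refine (integrable_bound n σ (|Real.log (cN n σ)| + Real.log q)).mono' ?_ ?_
  · refine (Continuous.log ?_ ?_).aestronglyMeasurable
    · unfold fMix; fun_prop
    · exact fun y => (fMix_pos q n hq σ hσ _ _).ne'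
  · exact Filter.Eventually.of_forall fun y => log_fMix_bound q n hq σ hσ w j y

lemma integrable_log_wy (q n : ℕ) (hq : 2 ≤ q) (σ s : ℝ) (hσ : 0 < σ) (j : Fin q) :
    Integrable (fun z : (Fin q → Fin n → ℝ) × (Fin n → ℝ) =>
      Real.log (fMix q n σ z.1 (fun i => z.1 j i + z.2 i))) ((measW q n s).prod (measY n σ)) := by
  refine ((integrable_bound n σ (|Real.log (cN n σ)| + Real.log q)).comp_snd _).mono' ?_ ?_
  · refine (Continuous.log ?_ ?_).aestronglyMeasurable
    · unfold fMix; fun_prop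
    · exact fun y => (fMix_pos q n hq σ hσ _ _).ne'
  · exact Filter.Eventually.of_forall fun z => log_fMix_bound q n hq σ hσ z.1 j z.2

lemma entropy_eq (q n : ℕ) (hq : 2 ≤ q) (σ : ℝ) (hσ : 0 < σ) (w : Fin q → Fin n → ℝ) :
    ∫ x, fMix q n σ w x * Real.log (fMix q n σ w x)
      = (1 / (q:ℝ)) * ∑ j, ∫ y, Real.log (fMix q n σ w (fun i => w j i + y i)) ∂(measY n σ) := by
  set g : (Fin n → ℝ) → ℝ := fun x => Real.log (fMix q n σ w x) with hg
  have key : ∀ j : Fin q,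
      Integrable (fun x : Fin n → ℝ =>
        cN n σ * Real.exp (-(∑ i, (x i - w j i) ^ 2) / (2 * σ ^ 2)) * g x) ∧
      ∫ x : Fin n → ℝ, cN n σ * Real.exp (-(∑ i, (x i - w j i) ^ 2) / (2 * σ ^ 2)) * g x
        = ∫ y, g (fun i => w j i + y i) ∂(measY n σ) := by
    intro j
    have e : (fun x : Fin n → ℝ =>
        cN n σ * Real.exp (-(∑ i, (x i - w j i) ^ 2) / (2 * σ ^ 2)) * g x)
        = fun x => (fun y : Fin n → ℝ => ((2 * π * σ ^ 2) ^ (-(n : ℝ) / 2) *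
          Real.exp (-(∑ i, y i ^ 2) / (2 * σ ^ 2))) * g (fun i => w j i + y i)) (x - w j) := by
      ext x
      simp [cN]
    rw [e]
    constructor
    · exact ((integrable_gaussN_iff n σ hσ _).2
        (integrable_log_y q n hq σ hσ w j)).comp_sub_right (w j)
    · rw [integral_sub_right_eq_self (fun y : Fin n → ℝ => ((2 * π * σ ^ 2) ^ (-(n : ℝ) / 2) *
          Real.exp (-(∑ i, y i ^ 2) / (2 * σ ^ 2))) * g (fun i => w j i + y i))]
      exact integral_gaussN n σ hσ _
  have e : ∀ x, fMix q n σ w x * g x = (1 / (q:ℝ)) *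
      ∑ j, cN n σ * Real.exp (-(∑ i, (x i - w j i) ^ 2) / (2 * σ ^ 2)) * g x := by
    intro x
    rw [← Finset.sum_mul, ← mul_assoc]; rfl
  change ∫ x, fMix q n σ w x * g x = _
  simp_rw [e]
  rw [integral_const_mul, integral_finsetSum _ fun j _ => (key j).1]
  congr 1
  exact Finset.sum_congr rfl fun j _ => (key j).2

lemma fMix_perm (q n : ℕ) (σ : ℝ) (w : Fin q → Fin n → ℝ) (x : Fin n → ℝ)
    (e : Equiv.Perm (Fin q)) : fMix q n σ (fun k => w (e k)) x = fMix q n σ w x := by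
  unfold fMix
  congr 1
  exact Equiv.sum_comp e (fun j => cN n σ * Real.exp (-(∑ i, (x i - w j i) ^ 2) / (2 * σ ^ 2)))

lemma integral_measW_perm (q n : ℕ) (s : ℝ) (e : Equiv.Perm (Fin q))
    (g : (Fin q → Fin n → ℝ) → ℝ) :
    ∫ w, g (fun k => w (e k)) ∂(measW q n s) = ∫ w, g w ∂(measW q n s) := by
  have h := measurePreserving_piCongrLeft (fun _ : Fin q =>
    Measure.pi fun _ : Fin n => gaussianReal 0 (Real.toNNReal (s ^ 2))) e.symm
  have h2 := h.integral_comp' g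
  change _ = ∫ w, g w ∂(measW q n s) at h2
  rw [← h2]
  refine integral_congr_ae (Filter.Eventually.of_forall fun w => ?_)
  change g _ = g _
  congr 1
  ext k i
  have := MeasurableEquiv.piCongrLeft_apply_apply (β := fun _ : Fin q => Fin n → ℝ) e.symm w (e k)
  simp only [Equiv.symm_apply_apply] at this
  rw [this]

lemma avg_entropy_eq (q n : ℕ) (hq : 2 ≤ q) (σ s : ℝ) (hσ : 0 < σ) :
    ∫ w, (∫ x, fMix q n σ w x * Real.log (fMix q n σ w x)) ∂(measW q n s)
      = ∫ z, Real.log (fMix q n σ z.1 (fun i => z.1 ⟨q - 1, by omega⟩ i + z.2 i))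
          ∂((measW q n s).prod (measY n σ)) := by
  have hq0 : (q:ℝ) ≠ 0 := by exact_mod_cast (by omega : q ≠ 0)
  simp_rw [entropy_eq q n hq σ hσ]
  rw [integral_const_mul, integral_finsetSum]
  · have : ∀ j : Fin q,
        ∫ w, ∫ y, Real.log (fMix q n σ w (fun i => w j i + y i)) ∂(measY n σ) ∂(measW q n s)
        = ∫ z, Real.log (fMix q n σ z.1 (fun i => z.1 ⟨q - 1, by omega⟩ i + z.2 i))
          ∂((measW q n s).prod (measY n σ)) := by
      intro j
      rw [integral_prod _ (integrable_log_wy q n hq σ s hσ _)]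
      rw [← integral_measW_perm q n s (Equiv.swap j ⟨q - 1, by omega⟩)]
      simp only [Equiv.swap_apply_left]
      refine integral_congr_ae (Filter.Eventually.of_forall fun w => ?_)
      simp only [fMix_perm]
    simp_rw [this]
    rw [Finset.sum_const, Finset.card_univ, Fintype.card_fin, nsmul_eq_mul]
    field_simp
  · intro j _
    exact (integrable_log_wy q n hq σ s hσ j).integral_prod_left

/-- log-density in terms of normalized differences -/
def phiV (q n : ℕ) (σ μ : ℝ) (v : Fin q → Fin n → ℝ) : ℝ :=
  Real.log ((1 / (q:ℝ)) * ∑ l, cN n σ * Real.exp (-(μ / 2) * ∑ i, v l i ^ 2))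

lemma phiV_diff (q n : ℕ) (hq : 2 ≤ q) (σ s : ℝ) (hσ : 0 < σ) (hs : 0 < s)
    (μ : ℝ) (hμ : μ = s ^ 2 / σ ^ 2) (z : (Fin q → Fin n → ℝ) × (Fin n → ℝ)) :
    Real.log (fMix q n σ z.1 (fun i => z.1 ⟨q - 1, by omega⟩ i + z.2 i))
      = phiV q n σ μ (diffV q n hq s z) := by
  unfold phiV fMix diffV
  congr 2
  refine Finset.sum_congr rfl fun l _ => ?_
  congr 2
  simp_rw [div_pow]
  rw [← Finset.sum_div, hμ]
  field_simp

lemma phiV_cont (q n : ℕ) (hq : 2 ≤ q) (σ μ : ℝ) (hσ : 0 < σ) : Continuous (phiV q n σ μ) := by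
  have hc := cN_pos n σ hσ
  have hq0 : (0:ℝ) < q := by exact_mod_cast (by omega : 0 < q)
  have : Nonempty (Fin q) := ⟨⟨0, by omega⟩⟩
  unfold phiV
  refine Continuous.log (by fun_prop) fun v => ?_
  have : 0 < ∑ l, cN n σ * Real.exp (-(μ / 2) * ∑ i, v l i ^ 2) :=
    Finset.sum_pos (fun j _ => by positivity) Finset.univ_nonempty
  positivity

lemma integral_phi (q n : ℕ) (hq : 2 ≤ q) (σ s : ℝ) (hσ : 0 < σ) (hs : 0 < s)
    (μ : ℝ) (hμ : μ = s ^ 2 / σ ^ 2) :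
    ∫ z, Real.log (fMix q n σ z.1 (fun i => z.1 ⟨q - 1, by omega⟩ i + z.2 i))
          ∂((measW q n s).prod (measY n σ))
      = ∫ u, phiV q n σ μ (rotU q n μ u) ∂(measU q n μ) := by
  simp_rw [phiV_diff q n hq σ s hσ hs μ hμ]
  have hc := phiV_cont q n hq σ μ hσ
  rw [← integral_map (continuous_diffV q n hq s).measurable.aemeasurable
    hc.aestronglyMeasurable, law_eq q n hq σ s hσ hs μ hμ,
    integral_map (continuous_rotU q n μ).measurable.aemeasurable hc.aestronglyMeasurable]

/-- the common quadratic part -/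
def quadQ (q n : ℕ) (hq : 2 ≤ q) (μ : ℝ) (u : Fin q → Fin n → ℝ) : ℝ :=
  ∑ i, (cJ q μ 1 * u ⟨q - 2, by omega⟩ i + cJ q μ 2 * u ⟨q - 1, by omega⟩ i) ^ 2

lemma sum_c (q : ℕ) (hq : 2 ≤ q) (μ : ℝ) (hμ : 0 < μ) :
    (mJ q μ 1)⁻¹ * cJ q μ 1 ^ 2 + (mJ q μ 2)⁻¹ * cJ q μ 2 ^ 2 = 1 / μ + q / ((q:ℝ) - 1) := by
  have hma := m_add q μ
  have hmm := m_mul q μ hq hμ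
  have hmp := m_pos q μ hq hμ
  have h := eMat_quad q hq μ hμ (fun l => if (l:ℕ) + 1 = q then 0 else ((q:ℝ) - 1)⁻¹)
  obtain ⟨p, rfl⟩ : ∃ p, q = p + 2 := ⟨q - 2, by omega⟩
  have hp1 : ((p:ℝ) + 1) ≠ 0 := by positivity
  have hp2 : ((p + 2 : ℕ) : ℝ) - 1 = p + 1 := by push_cast; ring
  rw [hp2] at h ⊢
  have e1 : ∀ k, ∑ l, eMat (p+2) μ k l * (if (l:ℕ) + 1 = p + 2 then 0 else ((p:ℝ) + 1)⁻¹)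
      = if (k:ℕ) < p then 0 else if (k:ℕ) = p then cJ (p+2) μ 1 else cJ (p+2) μ 2 := by
    intro k
    unfold eMat
    simp only [Nat.add_sub_cancel]
    split_ifs with h1 h2
    · have : ∀ l, alphaVec (p+2) (k+1) l * (if (l:ℕ) + 1 = p + 2 then 0 else ((p:ℝ) + 1)⁻¹)
        = ((p:ℝ) + 1)⁻¹ * alphaVec (p+2) (k+1) l := by
        intro l
        split_ifs with h
        · rw [alphaVec_last _ _ l h (by omega)]; ring
        · ring
      simp_rw [this]
      rw [← Finset.mul_sum, alphaVec_sum _ _ (by omega), mul_zero]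
    all_goals
      simp_rw [mul_assoc, ← Finset.mul_sum, ite_mul, mul_ite, mul_zero, one_mul]
      rw [Finset.sum_congr rfl (g := fun l : Fin (p+2) =>
        if (l:ℕ) + 1 = p + 2 then (0:ℝ) else ((p:ℝ) + 1)⁻¹)
        (fun l _ => by split_ifs <;> rfl), sum_last]
      field_simp
      try ring
  simp_rw [e1, ite_pow] at h
  rw [sum_last, sum_last, Fin.sum_univ_castSucc, Fin.sum_univ_castSucc] at h
  have hp : ∀ k : Fin p, (k:ℕ) < p := fun k => k.2
  simp only [dCoef, Fin.val_castSucc, Fin.val_last, Nat.add_sub_cancel, if_true, hp,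
    lt_irrefl, if_false, mul_zero, Finset.sum_const_zero, zero_add,
    show ¬ (p + 1 < p) by omega, show ¬ (p + 1 = p) by omega, show p + 2 - 1 + 1 = p + 2 by omega,
    ne_eq, OfNat.ofNat_ne_zero, not_false_eq_true, zero_pow] at h
  rw [h]
  push_cast
  field_simp
  ring

lemma quadQ_integral (q n : ℕ) (hq : 2 ≤ q) (μ : ℝ) (hμ : 0 < μ) :
    Integrable (quadQ q n hq μ) (measU q n μ) ∧
    ∫ u, quadQ q n hq μ u ∂(measU q n μ) = n * (1 / μ + q / ((q:ℝ) - 1)) := by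
  have hlaw : ∀ i : Fin n, (measU q n μ).map
      (fun u => cJ q μ 1 * u ⟨q - 2, by omega⟩ i + cJ q μ 2 * u ⟨q - 1, by omega⟩ i)
      = gaussianReal 0 (Real.toNNReal (1 / μ + q / ((q:ℝ) - 1))) := by
    intro i
    have hm : Measurable (fun u : Fin q → Fin n → ℝ =>
      cJ q μ 1 * u ⟨q - 2, by omega⟩ i + cJ q μ 2 * u ⟨q - 1, by omega⟩ i) := by fun_prop
    have : IsProbabilityMeasure ((measU q n μ).map
      (fun u => cJ q μ 1 * u ⟨q - 2, by omega⟩ i + cJ q μ 2 * u ⟨q - 1, by omega⟩ i)) :=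
      Measure.isProbabilityMeasure_map hm.aemeasurable
    apply Measure.ext_of_charFun
    ext t
    rw [charFun_apply_real, charFun_gaussianReal, integral_map hm.aemeasurable (by fun_prop)]
    have hne : (⟨q - 2, by omega⟩ : Fin q) ≠ ⟨q - 1, by omega⟩ := by
      intro h; rw [Fin.mk.injEq] at h; omega
    have e : ∀ u : Fin q → Fin n → ℝ, ((t:ℂ) *
        ((cJ q μ 1 * u ⟨q - 2, by omega⟩ i + cJ q μ 2 * u ⟨q - 1, by omega⟩ i : ℝ) : ℂ)) =
        ((∑ k, ∑ i', ((if k = ⟨q - 2, by omega⟩ then (if i' = i then t * cJ q μ 1 else 0) else 0)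
          + (if k = ⟨q - 1, by omega⟩ then (if i' = i then t * cJ q μ 2 else 0) else 0)) * u k i' : ℝ) : ℂ) := by
      intro u
      rw [← Complex.ofReal_mul]
      congr 1
      simp only [add_mul, ite_mul, zero_mul, Finset.sum_add_distrib]
      rw [Finset.sum_comm, Finset.sum_comm (f := fun k i' => if k = ⟨q - 1, by omega⟩ then
        (if i' = i then t * cJ q μ 2 * u k i' else 0) else 0)]
      simp only [Finset.sum_ite_eq', Finset.mem_univ, if_true]
      ring
    simp_rw [e]
    unfold measU
    rw [charQN]
    have hq1 : (0:ℝ) < (q:ℝ) - 1 := by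
      have : (2:ℝ) ≤ q := by exact_mod_cast hq
      linarith
    have hd : ∀ k, ((Real.toNNReal (dCoef q μ k)⁻¹ : ℝ≥0) : ℝ) = (dCoef q μ k)⁻¹ := fun k =>
      Real.coe_toNNReal _ (inv_nonneg.2 (d_pos q hq μ hμ k).le)
    simp_rw [hd]
    rw [Real.coe_toNNReal _ (by positivity), ← sum_c q hq μ hμ]
    have e2 : ∀ k i', (dCoef q μ k)⁻¹ *
        ((if k = ⟨q - 2, by omega⟩ then (if i' = i then t * cJ q μ 1 else 0) else 0)
          + (if k = ⟨q - 1, by omega⟩ then (if i' = i then t * cJ q μ 2 else 0) else 0)) ^ 2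
        = (if k = ⟨q - 2, by omega⟩ then (if i' = i then (dCoef q μ k)⁻¹ * (t * cJ q μ 1)^2 else 0) else 0)
          + (if k = ⟨q - 1, by omega⟩ then (if i' = i then (dCoef q μ k)⁻¹ * (t * cJ q μ 2)^2 else 0) else 0) := by
      intro k i'
      by_cases h1 : k = ⟨q - 2, by omega⟩
      · have h2 : ¬ k = ⟨q - 1, by omega⟩ := by rw [h1]; exact hne
        rw [if_neg h2, if_neg h2, if_pos h1, if_pos h1]
        split_ifs <;> ring
      · rw [if_neg h1, if_neg h1]
        split_ifs <;> ring
    simp_rw [e2, Finset.sum_add_distrib]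
    rw [Finset.sum_comm, Finset.sum_comm (f := fun k i' => if k = ⟨q - 1, by omega⟩ then
        (if i' = i then (dCoef q μ k)⁻¹ * (t * cJ q μ 2)^2 else 0) else 0)]
    simp only [Finset.sum_ite_eq', Finset.mem_univ, if_true]
    have d1 : dCoef q μ ⟨q - 2, by omega⟩ = mJ q μ 1 := by simp [dCoef]
    have d2 : dCoef q μ ⟨q - 1, by omega⟩ = mJ q μ 2 := by
      unfold dCoef
      rw [if_neg (by simp only; omega), if_neg (by simp only; omega)]
    rw [d1, d2]
    congr 1
    push_cast
    ring
  have hcoord : ∀ i : Fin n, Integrable (fun u : Fin q → Fin n → ℝ =>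
      (cJ q μ 1 * u ⟨q - 2, by omega⟩ i + cJ q μ 2 * u ⟨q - 1, by omega⟩ i) ^ 2) (measU q n μ) ∧
      ∫ u : Fin q → Fin n → ℝ,
      (cJ q μ 1 * u ⟨q - 2, by omega⟩ i + cJ q μ 2 * u ⟨q - 1, by omega⟩ i) ^ 2 ∂(measU q n μ)
        = 1 / μ + q / ((q:ℝ) - 1) := by
    intro i
    have hm : Measurable (fun u : Fin q → Fin n → ℝ =>
      cJ q μ 1 * u ⟨q - 2, by omega⟩ i + cJ q μ 2 * u ⟨q - 1, by omega⟩ i) := by fun_prop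
    have hq1 : (0:ℝ) < (q:ℝ) - 1 := by
      have : (2:ℝ) ≤ q := by exact_mod_cast hq
      linarith
    constructor
    · have h2 : Integrable (fun x : ℝ => x ^ 2) ((measU q n μ).map
        (fun u => cJ q μ 1 * u ⟨q - 2, by omega⟩ i + cJ q μ 2 * u ⟨q - 1, by omega⟩ i)) := by
        rw [hlaw]
        exact (memLp_id_gaussianReal' 2 (by simp)).integrable_sq
      exact h2.comp_measurable hm
    · have h3 := integral_map (μ := measU q n μ) hm.aemeasurable
        (f := fun x : ℝ => x ^ 2) (by fun_prop)
      rw [← h3, hlaw]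
      have h4 := variance_id_gaussianReal (μ := 0)
        (v := Real.toNNReal (1 / μ + q / ((q:ℝ) - 1)))
      rw [variance_of_integral_eq_zero (by fun_prop) (by simp [integral_id_gaussianReal]),
        Real.coe_toNNReal _ (by positivity)] at h4
      exact h4
  unfold quadQ
  refine ⟨integrable_finsetSum _ fun i _ => (hcoord i).1, ?_⟩
  rw [integral_finsetSum _ fun i _ => (hcoord i).1]
  simp_rw [fun i => (hcoord i).2]
  simp [mul_add]

lemma rot_sq (q n : ℕ) (hq : 2 ≤ q) (μ : ℝ) (u : Fin q → Fin n → ℝ) (l : Fin q) :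
    ∑ i, rotU q n μ u l i ^ 2 = quadQ q n hq μ u +
      (((∑ m : Fin q, ∑ m' : Fin q, omegaVec q l m * omegaVec q l m' *
        ∑ i, u m i * u m' i)
      + (2 / Real.sqrt ((q : ℝ) - 1 + xJ q μ 1 ^ 2)) *
          ∑ m : Fin q, omegaVec q l m * ∑ i, u m i * u ⟨q - 2, by omega⟩ i
      + (2 / Real.sqrt ((q : ℝ) - 1 + xJ q μ 2 ^ 2)) *
          ∑ m : Fin q, omegaVec q l m * ∑ i, u m i * u ⟨q - 1, by omega⟩ i)
      + 2 * (if (l : ℕ) + 1 = q then (1 : ℝ) else 0) *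
      (((xJ q μ 2 ^ 2 - 1) / (2 * ((q : ℝ) - 1 + xJ q μ 2 ^ 2))) *
        (∑ i, u ⟨q - 1, by omega⟩ i * u ⟨q - 1, by omega⟩ i)
      + ((xJ q μ 1 ^ 2 - 1) / (2 * ((q : ℝ) - 1 + xJ q μ 1 ^ 2))) *
        (∑ i, u ⟨q - 2, by omega⟩ i * u ⟨q - 2, by omega⟩ i)
      + ((xJ q μ 1 * xJ q μ 2 - 1) /
          (Real.sqrt ((q : ℝ) - 1 + xJ q μ 1 ^ 2) * Real.sqrt ((q : ℝ) - 1 + xJ q μ 2 ^ 2))) *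
        (∑ i, u ⟨q - 1, by omega⟩ i * u ⟨q - 2, by omega⟩ i))) := by
  set k1 : Fin q := ⟨q - 2, by omega⟩ with hk1
  set k2 : Fin q := ⟨q - 1, by omega⟩ with hk2
  set A : Fin n → ℝ := fun i => ∑ m, omegaVec q l m * u m i with hA
  set y1 : ℝ := if (l:ℕ) + 1 = q then xJ q μ 1 else 1 with hy1
  set y2 : ℝ := if (l:ℕ) + 1 = q then xJ q μ 2 else 1 with hy2
  have hrot : ∀ i, rotU q n μ u l i = A i + cJ q μ 1 * y1 * u k1 i + cJ q μ 2 * y2 * u k2 i := by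
    intro i
    have hne : k1 ≠ k2 := by
      intro h; rw [hk1, hk2, Fin.mk.injEq] at h; omega
    have : ∀ k, eMat q μ k l * u k i = omegaVec q l k * u k i
        + (if k = k1 then cJ q μ 1 * y1 * u k i else 0)
        + (if k = k2 then cJ q μ 2 * y2 * u k i else 0) := by
      intro k
      have hk := k.2
      have h1 : k = k1 ↔ (k:ℕ) = q - 2 := by rw [hk1, Fin.ext_iff]
      have h2 : k = k2 ↔ (k:ℕ) = q - 1 := by rw [hk2, Fin.ext_iff]
      unfold eMat omegaVec
      by_cases a1 : (k:ℕ) < q - 2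
      · rw [if_pos a1, if_pos a1, if_neg (by rw [h1]; omega), if_neg (by rw [h2]; omega)]; ring
      · by_cases a2 : (k:ℕ) = q - 2
        · have b2 : ¬ k = k2 := by rw [h2]; omega
          rw [if_neg a1, if_neg a1, if_pos a2, if_pos (h1.2 a2), if_neg b2]; ring
        · have b1 : ¬ k = k1 := by rw [h1]; exact a2
          rw [if_neg a1, if_neg a1, if_neg a2, if_neg b1, if_pos (h2.2 (by omega))]; ring
    unfold rotU
    simp_rw [this, Finset.sum_add_distrib, Finset.sum_ite_eq', Finset.mem_univ, if_true]
    rfl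
  have hAA : ∑ m : Fin q, ∑ m' : Fin q, omegaVec q l m * omegaVec q l m' * ∑ i, u m i * u m' i
      = ∑ i, A i ^ 2 := by
    have : ∀ i, A i ^ 2 = ∑ m : Fin q, ∑ m' : Fin q,
        omegaVec q l m * omegaVec q l m' * (u m i * u m' i) := by
      intro i
      rw [pow_two, hA, Finset.sum_mul_sum]
      exact Finset.sum_congr rfl fun m _ => Finset.sum_congr rfl fun m' _ => by ring
    simp_rw [this, Finset.mul_sum]
    rw [Finset.sum_comm]
    rw [Finset.sum_comm (s := Finset.univ (α := Fin n))]
    rw [Finset.sum_comm]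
    exact Finset.sum_congr rfl fun m _ => Finset.sum_comm
  have hAu : ∀ k, ∑ m : Fin q, omegaVec q l m * ∑ i, u m i * u k i = ∑ i, A i * u k i := by
    intro k
    simp_rw [Finset.mul_sum, hA, Finset.sum_mul]
    rw [Finset.sum_comm]
    exact Finset.sum_congr rfl fun m _ => Finset.sum_congr rfl fun m' _ => by ring
  have hA0 : (l:ℕ) + 1 = q → ∀ i, A i = 0 := by
    intro hl i
    refine Finset.sum_eq_zero fun m _ => ?_
    unfold omegaVec
    split_ifs with h
    · rw [alphaVec_last q _ l hl (by omega), zero_mul]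
    · rw [zero_mul]
  have hc1 := c_sq q μ hq 1
  have hc2 := c_sq q μ hq 2
  have t1 : (xJ q μ 1 ^ 2 - 1) / (2 * ((q : ℝ) - 1 + xJ q μ 1 ^ 2))
      = cJ q μ 1 ^ 2 * (xJ q μ 1 ^ 2 - 1) / 2 := by
    rw [← eq_one_div_of_mul_eq_one_left hc1 |>.symm]
    rw [mul_comm 2, ← div_div]; ring
  have t2 : (xJ q μ 2 ^ 2 - 1) / (2 * ((q : ℝ) - 1 + xJ q μ 2 ^ 2))
      = cJ q μ 2 ^ 2 * (xJ q μ 2 ^ 2 - 1) / 2 := by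
    rw [← eq_one_div_of_mul_eq_one_left hc2 |>.symm]
    rw [mul_comm 2, ← div_div]; ring
  have t3 : (xJ q μ 1 * xJ q μ 2 - 1) /
          (Real.sqrt ((q : ℝ) - 1 + xJ q μ 1 ^ 2) * Real.sqrt ((q : ℝ) - 1 + xJ q μ 2 ^ 2))
      = (xJ q μ 1 * xJ q μ 2 - 1) * (cJ q μ 1 * cJ q μ 2) := by
    unfold cJ; rw [div_eq_mul_inv, mul_inv]
  have t4 : ∀ j, 2 / Real.sqrt ((q : ℝ) - 1 + xJ q μ j ^ 2) = 2 * cJ q μ j := fun j => by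
    unfold cJ; rw [div_eq_mul_inv]
  rw [hAA, hAu, hAu, t1, t2, t3, t4, t4]
  simp_rw [hrot]
  unfold quadQ
  rw [← hk1, ← hk2]
  simp only [Finset.mul_sum, ← Finset.sum_add_distrib]
  refine Finset.sum_congr rfl fun i _ => ?_
  by_cases hl : (l:ℕ) + 1 = q
  · rw [hy1, hy2, if_pos hl, if_pos hl, if_pos hl, hA0 hl i]; ring
  · rw [hy1, hy2, if_neg hl, if_neg hl, if_neg hl]; ring

lemma final_alg (n : ℕ) (σ : ℝ) (hσ : 0 < σ) :
    (n : ℝ) * Real.log (σ * Real.sqrt (2 * π * Real.exp 1)) = n / 2 - Real.log (cN n σ) := by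
  unfold cN
  have hpi := Real.pi_pos
  have h1 : Real.log (2 * π * σ ^ 2) = Real.log (2 * π) + 2 * Real.log σ := by
    rw [Real.log_mul (by positivity) (by positivity), Real.log_pow]; push_cast; ring
  have h2 : Real.log (2 * π * Real.exp 1) = Real.log (2 * π) + 1 := by
    rw [Real.log_mul (by positivity) (by positivity), Real.log_exp]
  rw [Real.log_rpow (by positivity), Real.log_mul (by positivity) (by positivity),
    Real.log_sqrt (by positivity), h1, h2]
  ring

/-- Theorem 3 of the paper.
`h(X|W) = n·ln(σ√(2πe)) + (n/2)·(q/(q−1))·μ + S`, where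
`S = −E_u[ ln( (1/q)·Σ_l exp(−(μ/2)(G_l + 2δ_{ql}T)) ) ]`. -/
theorem average_entropy_leading_terms_plus_S
    (q n : ℕ) (hq : 2 ≤ q) (hn : 1 ≤ n)
    (σ s : ℝ) (hσ : 0 < σ) (hs : 0 < s)
    (μ : ℝ) (hμ : μ = s ^ 2 / σ ^ 2)
    -- the Gaussian mixture density `f(x|w)`
    (f : (Fin q → Fin n → ℝ) → (Fin n → ℝ) → ℝ)
    (hf : ∀ w x, f w x =
      (1 / (q : ℝ)) * ∑ j : Fin q, (2 * π * σ ^ 2) ^ (-(n : ℝ) / 2) *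
        Real.exp (-(∑ i, (x i - w j i) ^ 2) / (2 * σ ^ 2)))
    -- the conditional differential entropy `h(X | W = w)`
    (hEnt : (Fin q → Fin n → ℝ) → ℝ)
    (hhEnt : ∀ w, hEnt w = -∫ x : Fin n → ℝ, f w x * Real.log (f w x))
    (hInt1 : ∀ w, Integrable (fun x : Fin n → ℝ => f w x * Real.log (f w x)))
    -- the average differential entropy `h(X|W)`
    (H : ℝ)
    (hH : H = ∫ w : Fin q → Fin n → ℝ,
      (∏ j : Fin q, (2 * π * s ^ 2) ^ (-(n : ℝ) / 2) *
        Real.exp (-(∑ i, w j i ^ 2) / (2 * s ^ 2))) * hEnt w)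
    (hInt2 : Integrable (fun w : Fin q → Fin n → ℝ =>
      (∏ j : Fin q, (2 * π * s ^ 2) ^ (-(n : ℝ) / 2) *
        Real.exp (-(∑ i, w j i ^ 2) / (2 * s ^ 2))) * hEnt w))
    -- the quantity `G_l`
    (G : (Fin q → Fin n → ℝ) → Fin q → ℝ)
    (hG : ∀ u l, G u l =
      (∑ m : Fin q, ∑ m' : Fin q, omegaVec q l m * omegaVec q l m' *
        ∑ i, u m i * u m' i)
      + (2 / Real.sqrt ((q : ℝ) - 1 + xJ q μ 1 ^ 2)) *
          ∑ m : Fin q, omegaVec q l m * ∑ i, u m i * u ⟨q - 2, by omega⟩ i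
      + (2 / Real.sqrt ((q : ℝ) - 1 + xJ q μ 2 ^ 2)) *
          ∑ m : Fin q, omegaVec q l m * ∑ i, u m i * u ⟨q - 1, by omega⟩ i)
    -- the quantity `T`
    (T : (Fin q → Fin n → ℝ) → ℝ)
    (hT : ∀ u, T u =
      ((xJ q μ 2 ^ 2 - 1) / (2 * ((q : ℝ) - 1 + xJ q μ 2 ^ 2))) *
        (∑ i, u ⟨q - 1, by omega⟩ i * u ⟨q - 1, by omega⟩ i)
      + ((xJ q μ 1 ^ 2 - 1) / (2 * ((q : ℝ) - 1 + xJ q μ 1 ^ 2))) *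
        (∑ i, u ⟨q - 2, by omega⟩ i * u ⟨q - 2, by omega⟩ i)
      + ((xJ q μ 1 * xJ q μ 2 - 1) /
          (Real.sqrt ((q : ℝ) - 1 + xJ q μ 1 ^ 2) * Real.sqrt ((q : ℝ) - 1 + xJ q μ 2 ^ 2))) *
        (∑ i, u ⟨q - 1, by omega⟩ i * u ⟨q - 2, by omega⟩ i))
    -- the quantity `S`
    (S : ℝ)
    (hS : S = -∫ u : Fin q → Fin n → ℝ,
      Real.log ((1 / (q : ℝ)) * ∑ l : Fin q,
        Real.exp (-(μ / 2) * (G u l + 2 * (if (l : ℕ) + 1 = q then (1 : ℝ) else 0) * T u)))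
      ∂(measU q n μ))
    (hInt3 : Integrable (fun u : Fin q → Fin n → ℝ =>
      Real.log ((1 / (q : ℝ)) * ∑ l : Fin q,
        Real.exp (-(μ / 2) * (G u l + 2 * (if (l : ℕ) + 1 = q then (1 : ℝ) else 0) * T u))))
      (measU q n μ)) :
    H = (n : ℝ) * Real.log (σ * Real.sqrt (2 * π * Real.exp 1))
      + ((n : ℝ) / 2) * ((q : ℝ) / ((q : ℝ) - 1)) * μ + S := by
  have hμ0 : 0 < μ := by rw [hμ]; positivity
  have hq0 : (0:ℝ) < q := by exact_mod_cast (by omega : 0 < q)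
  have hq1 : (0:ℝ) < (q:ℝ) - 1 := by
    have : (2:ℝ) ≤ q := by exact_mod_cast hq
    linarith
  have hcN := cN_pos n σ hσ
  have hne : Nonempty (Fin q) := ⟨⟨0, by omega⟩⟩
  have hf' : f = fMix q n σ := by
    ext w x
    rw [hf]; rfl
  subst hf'
  set D : (Fin q → Fin n → ℝ) → ℝ := fun u => Real.log ((1 / (q : ℝ)) * ∑ l : Fin q,
    Real.exp (-(μ / 2) * (G u l + 2 * (if (l : ℕ) + 1 = q then (1 : ℝ) else 0) * T u))) with hD
  have hphi : ∀ u, phiV q n σ μ (rotU q n μ u)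
      = (Real.log (cN n σ) - (μ / 2) * quadQ q n hq μ u) + D u := by
    intro u
    have e : ∀ l, cN n σ * Real.exp (-(μ / 2) * ∑ i, rotU q n μ u l i ^ 2)
        = (cN n σ * Real.exp (-(μ / 2) * quadQ q n hq μ u)) *
          Real.exp (-(μ / 2) * (G u l + 2 * (if (l : ℕ) + 1 = q then (1 : ℝ) else 0) * T u)) := by
      intro l
      rw [mul_assoc (cN n σ), ← Real.exp_add, ← mul_add, hG u l, hT u, rot_sq q n hq μ u l]
    unfold phiV
    simp_rw [e]
    rw [← Finset.mul_sum, mul_left_comm]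
    have hs0 : 0 < ∑ l : Fin q, Real.exp
        (-(μ / 2) * (G u l + 2 * (if (l : ℕ) + 1 = q then (1 : ℝ) else 0) * T u)) :=
      Finset.sum_pos (fun l _ => by positivity) Finset.univ_nonempty
    rw [Real.log_mul (by positivity) (by positivity), Real.log_mul (by positivity) (by positivity),
      Real.log_exp]
    ring
  have hQ := quadQ_integral q n hq μ hμ0
  have hH2 : H = -∫ u, phiV q n σ μ (rotU q n μ u) ∂(measU q n μ) := by
    rw [hH, integral_gaussQN q n s hs hEnt]
    simp_rw [hhEnt]
    rw [integral_neg, ← integral_phi q n hq σ s hσ hs μ hμ, ← avg_entropy_eq q n hq σ s hσ]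
    rfl
  rw [hH2]
  simp_rw [hphi]
  have i1 : Integrable (fun u => Real.log (cN n σ) - (μ / 2) * quadQ q n hq μ u) (measU q n μ) :=
    (integrable_const _).sub (hQ.1.const_mul _)
  rw [integral_add i1 hInt3,
    integral_sub (integrable_const _) (hQ.1.const_mul _), integral_const_mul, hQ.2,
    final_alg n σ hσ, hS]
  simp only [integral_const, probReal_univ, one_smul]
  field_simp
  ring

end
end

section
/- The 2×2 matrix W is orthogonal with determinant −1; that is, W_{11}² + W_{12}² = 1, W_{21}² + W_{22}² = 1, W_{11}W_{21} + W_{12}W_{22} = 0, and det W = −1. -/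
open Real Finset Matrix

noncomputable section

/-- The 2×2 matrix
`W = (1/μ + q/(q−1))^{−1/2} · [[ (1/√m₂)/√(q−1+x₂²), (1/√m₁)/√(q−1+x₁²) ],`
`[ (1/√m₁)/√(q−1+x₁²), −(1/√m₂)/√(q−1+x₂²) ]]`
(rows and columns indexed by `Fin 2`, so `W 0 0` is the paper's `W_{11}`, etc.). -/
def Wmat (q : ℕ) (μ : ℝ) : Matrix (Fin 2) (Fin 2) ℝ :=
  Matrix.of fun i j =>
    (Real.sqrt (1 / μ + (q : ℝ) / ((q : ℝ) - 1)))⁻¹ *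
      (if i = 0 then
        (if j = 0 then (Real.sqrt (mJ q μ 2))⁻¹ / Real.sqrt ((q : ℝ) - 1 + xJ q μ 2 ^ 2)
         else (Real.sqrt (mJ q μ 1))⁻¹ / Real.sqrt ((q : ℝ) - 1 + xJ q μ 1 ^ 2))
       else
        (if j = 0 then (Real.sqrt (mJ q μ 1))⁻¹ / Real.sqrt ((q : ℝ) - 1 + xJ q μ 1 ^ 2)
         else -((Real.sqrt (mJ q μ 2))⁻¹ / Real.sqrt ((q : ℝ) - 1 + xJ q μ 2 ^ 2))))

theorem W_key (q u a b : ℝ) (hu : u = q * a * b) (h : a + b = 1 + u)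
    (hq : 2 ≤ q) (ha : 0 < a) (hb : 0 < b) :
    (1 / u + q / (q - 1))⁻¹ * (b⁻¹ / (q - 1 + (1 - q * b) ^ 2)) +
    (1 / u + q / (q - 1))⁻¹ * (a⁻¹ / (q - 1 + (1 - q * a) ^ 2)) = 1 := by
  have hA : 0 < q - 1 + (1 - q * a) ^ 2 := by nlinarith [sq_nonneg (1 - q * a)]
  have hB : 0 < q - 1 + (1 - q * b) ^ 2 := by nlinarith [sq_nonneg (1 - q * b)]
  have hu0 : 0 < u := by rw [hu]; positivity
  have hq1 : 0 < q - 1 := by linarith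
  have hC : 0 < 1 / u + q / (q - 1) := by positivity
  suffices H : b⁻¹ / (q - 1 + (1 - q * b) ^ 2) + a⁻¹ / (q - 1 + (1 - q * a) ^ 2)
      = 1 / u + q / (q - 1) by
    rw [← mul_add, H, inv_mul_cancel₀ hC.ne']
  have P : (a * (q - 1 + (1 - q * a) ^ 2) + b * (q - 1 + (1 - q * b) ^ 2)) * (u * (q - 1))
      = (q - 1 + q * u) * (a * b * (q - 1 + (1 - q * a) ^ 2) * (q - 1 + (1 - q * b) ^ 2)) := by
    subst hu
    linear_combination ((1) * q ^ 5 * a ^ 3 * b ^ 3 +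
      (-1) * q ^ 4 * a ^ 3 * b ^ 2 +
      (-1) * q ^ 4 * a ^ 2 * b ^ 3 +
      (1) * q ^ 4 * a ^ 3 * b ^ 1 +
      (1) * q ^ 4 * a ^ 1 * b ^ 3 +
      (-1) * q ^ 3 * a ^ 3 * b ^ 1 +
      (1) * q ^ 3 * a ^ 2 * b ^ 2 +
      (-1) * q ^ 3 * a ^ 1 * b ^ 3 +
      (-2) * q ^ 3 * a ^ 2 * b ^ 1 +
      (-2) * q ^ 3 * a ^ 1 * b ^ 2 +
      (1) * q ^ 3 * a ^ 1 * b ^ 1 +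
      (2) * q ^ 2 * a ^ 2 * b ^ 1 +
      (2) * q ^ 2 * a ^ 1 * b ^ 2 +
      (-1) * q ^ 2 * a ^ 1 * b ^ 1) * h
  generalize q - 1 + (1 - q * a) ^ 2 = A at *
  generalize q - 1 + (1 - q * b) ^ 2 = B at *
  have hq2 := hq1.ne'
  have e1 : b⁻¹ / B + a⁻¹ / A = (a * A + b * B) / (a * b * A * B) := by field_simp
  have e2 : 1 / u + q / (q - 1) = (q - 1 + q * u) / (u * (q - 1)) := by field_simp
  rw [e1, e2, div_eq_div_iff (by positivity) (by positivity)]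
  exact P

/-- The 2×2 matrix `W` is orthogonal with determinant `−1`: its rows are orthonormal
(`W₁₁² + W₁₂² = 1`, `W₂₁² + W₂₂² = 1`, `W₁₁W₂₁ + W₁₂W₂₂ = 0`) and `det W = −1`. -/
theorem Wmat_orthogonal_det_neg_one
    (q : ℕ) (hq : 2 ≤ q) (μ : ℝ) (hμ : 0 < μ) :
    Wmat q μ 0 0 ^ 2 + Wmat q μ 0 1 ^ 2 = 1 ∧
    Wmat q μ 1 0 ^ 2 + Wmat q μ 1 1 ^ 2 = 1 ∧
    Wmat q μ 0 0 * Wmat q μ 1 0 + Wmat q μ 0 1 * Wmat q μ 1 1 = 0 ∧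
    (Wmat q μ).det = -1 := by
  have hq' : (2 : ℝ) ≤ q := by exact_mod_cast hq
  have hq0 : (0 : ℝ) < q := by linarith
  set S := μ ^ 2 - (4 / (q : ℝ) - 2) * μ + 1 with hS
  have hlt : 4 * μ / q ≤ 2 * μ := by
    rw [div_le_iff₀ hq0]; nlinarith
  have hlt0 : 0 < 4 * μ / q := by positivity
  have hS' : S = (μ + 1) ^ 2 - 4 * μ / q := by rw [hS]; ring
  have hSn : 0 ≤ S := by rw [hS']; nlinarith
  have hss := Real.sq_sqrt hSn
  have hsn := Real.sqrt_nonneg S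
  have e1 : mJ q μ 1 = (μ + 1 + √S) / 2 := by
    simp only [mJ, lamJ, ← hS]; ring
  have e2 : mJ q μ 2 = (μ + 1 - √S) / 2 := by
    simp only [mJ, lamJ, ← hS]; ring
  have hlt1 : √S < μ + 1 := by
    apply lt_of_pow_lt_pow_left₀ 2 (by linarith); rw [hss, hS']; linarith
  have ha : 0 < mJ q μ 1 := by rw [e1]; linarith
  have hb : 0 < mJ q μ 2 := by rw [e2]; linarith
  have hsum : mJ q μ 1 + mJ q μ 2 = 1 + μ := by rw [e1, e2]; ring
  have hprod : μ = q * mJ q μ 1 * mJ q μ 2 := by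
    have : mJ q μ 1 * mJ q μ 2 = μ / q := by
      rw [e1, e2]; linear_combination (-1 / 4) * hss - (1 / 4) * hS'
    rw [mul_assoc, this]; field_simp
  have key := W_key q μ _ _ hprod hsum hq' ha hb
  have hA : 0 ≤ (q : ℝ) - 1 + xJ q μ 1 ^ 2 := by nlinarith [sq_nonneg (xJ q μ 1)]
  have hB : 0 ≤ (q : ℝ) - 1 + xJ q μ 2 ^ 2 := by nlinarith [sq_nonneg (xJ q μ 2)]
  have hC : 0 ≤ 1 / μ + (q : ℝ) / ((q : ℝ) - 1) := by
    have : (0 : ℝ) < (q : ℝ) - 1 := by linarith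
    positivity
  have main : Wmat q μ 0 0 ^ 2 + Wmat q μ 0 1 ^ 2 = 1 := by
    simp only [Wmat, Matrix.of_apply, if_true, one_ne_zero, if_false]
    rw [mul_pow, mul_pow, div_pow, div_pow, inv_pow, inv_pow, inv_pow, Real.sq_sqrt hA,
      Real.sq_sqrt hB, Real.sq_sqrt hC, Real.sq_sqrt ha.le, Real.sq_sqrt hb.le]
    exact key
  have h10 : Wmat q μ 1 0 = Wmat q μ 0 1 := by simp [Wmat]
  have h11 : Wmat q μ 1 1 = - Wmat q μ 0 0 := by simp [Wmat]
  refine ⟨main, ?_, ?_, ?_⟩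
  · rw [h10, h11]; linarith
  · rw [h10, h11]; ring
  · rw [Matrix.det_fin_two, h10, h11]; linarith

end
end

section
/- Let u_1,…,u_{q−2}, r̃, s̃ ∈ ℝⁿ be arbitrary, and set u_{q−1} = m_1^{−1/2}·(W_{21}·r̃ + W_{22}·s̃) and u_q = m_2^{−1/2}·(W_{11}·r̃ + W_{12}·s̃). Then, with w_l = Σ_{m=1}^{q−2} α_{m,l}·u_m, for every 1 ≤ l ≤ q one has G_l = w_l·w_l + 2·√(1/μ + q/(q−1))·w_l·r̃, and T = (1/2)·(1+μq/(q−1))^{−1}·[ −(q/(q−1))·(2+μq/(q−1))·r̃·r̃ + (q/(q−1))·s̃·s̃ + (2/√μ)·√(q/(q−1))·r̃·s̃ ]. -/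
open Real Finset Matrix

noncomputable section

/-- The basic facts about `m₁, m₂`. -/
theorem mJ_facts (q : ℕ) (hq : 2 ≤ q) (μ : ℝ) (hμ : 0 < μ) :
    0 < mJ q μ 2 ∧ mJ q μ 2 < 1 ∧ 1 < mJ q μ 1 ∧
    mJ q μ 1 + mJ q μ 2 - 1 = μ ∧ (q : ℝ) * (mJ q μ 1 * mJ q μ 2) = μ := by
  have hq' : (2 : ℝ) ≤ q := by exact_mod_cast hq
  have hq0 : (0 : ℝ) < q := by linarith
  have h4 : (q : ℝ) * (4 / (q : ℝ)) = 4 := by field_simp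
  set Z := 4 / (q : ℝ) with hZ
  have hZ0 : 0 < Z := by positivity
  have hZ2 : Z ≤ 2 := by rw [hZ, div_le_iff₀ hq0]; linarith
  have hD : 0 ≤ μ ^ 2 - (Z - 2) * μ + 1 := by nlinarith
  set S := Real.sqrt (μ ^ 2 - (Z - 2) * μ + 1) with hS
  have hS2 : S ^ 2 = μ ^ 2 - (Z - 2) * μ + 1 := Real.sq_sqrt hD
  have hS0 : 0 ≤ S := Real.sqrt_nonneg _
  have e1 : mJ q μ 1 = (μ + 1 + S) / 2 := by
    simp only [mJ, lamJ, ← hZ, ← hS]; ring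
  have e2 : mJ q μ 2 = (μ + 1 - S) / 2 := by
    simp only [mJ, lamJ, ← hZ, ← hS]; ring
  have b1 : S < μ + 1 := by nlinarith [mul_pos hZ0 hμ]
  have b2 : 1 - μ < S := by
    by_contra h
    push Not at h
    nlinarith [mul_pos hZ0 hμ]
  have b3 : μ - 1 < S := by
    by_contra h
    push Not at h
    nlinarith [mul_pos hZ0 hμ]
  rw [e1, e2]
  refine ⟨by linarith, by linarith, by linarith, by ring, ?_⟩
  linear_combination (-(q : ℝ) / 4) * hS2 + μ / 4 * h4

/-- Expansion of a weighted sum of dot products. -/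
theorem sum_dot_left {q n : ℕ} (f : Fin q → ℝ) (u : Fin q → Fin n → ℝ) (v : Fin n → ℝ) :
    ∑ m, f m * ∑ i, u m i * v i = ∑ i, (∑ m, f m * u m i) * v i := by
  simp only [Finset.mul_sum, Finset.sum_mul]
  rw [Finset.sum_comm]
  refine Finset.sum_congr rfl fun i _ => Finset.sum_congr rfl fun m _ => by ring

theorem sum_dot_both {q n : ℕ} (f : Fin q → ℝ) (u : Fin q → Fin n → ℝ) :
    ∑ m, ∑ m', f m * f m' * ∑ i, u m i * u m' i
      = ∑ i, (∑ m, f m * u m i) * (∑ m, f m * u m i) := by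
  rw [← sum_dot_left f u]
  refine Finset.sum_congr rfl fun m _ => ?_
  have := sum_dot_left f u (u m)
  calc _ = f m * ∑ m', f m' * ∑ i, u m' i * u m i := by
        rw [Finset.mul_sum]
        refine Finset.sum_congr rfl fun m' _ => ?_
        rw [mul_assoc]
        simp only [mul_comm (u m _)]
    _ = _ := by rw [this]; simp only [mul_comm (u m _)]

theorem dot_lin {n : ℕ} (r s : Fin n → ℝ) (a b c d : ℝ) :
    ∑ i, (a * r i + b * s i) * (c * r i + d * s i)
      = a * c * (∑ i, r i * r i) + b * d * (∑ i, s i * s i)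
        + (a * d + b * c) * (∑ i, r i * s i) := by
  simp only [Finset.mul_sum, ← Finset.sum_add_distrib]
  exact Finset.sum_congr rfl fun i _ => by ring

theorem dot_lin_right {n : ℕ} (w r s : Fin n → ℝ) (c d : ℝ) :
    ∑ i, w i * (c * r i + d * s i) = c * (∑ i, w i * r i) + d * (∑ i, w i * s i) := by
  simp only [Finset.mul_sum, ← Finset.sum_add_distrib]
  exact Finset.sum_congr rfl fun i _ => by ring

/-- Corollary 4 of the paper.
With `u_{q−1} = m₁^{−1/2}(W₂₁ r̃ + W₂₂ s̃)` and `u_q = m₂^{−1/2}(W₁₁ r̃ + W₁₂ s̃)`,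
and `w_l = Σ_{m=1}^{q−2} α_{m,l} u_m`, the quantities `G_l` and `T` become
`G_l = w_l·w_l + 2√(1/μ + q/(q−1)) w_l·r̃` and
`T = ½(1+μq/(q−1))⁻¹[ −(q/(q−1))(2+μq/(q−1)) r̃·r̃ + (q/(q−1)) s̃·s̃ + (2/√μ)√(q/(q−1)) r̃·s̃ ]`. -/
theorem G_T_in_tilde_variables
    (q n : ℕ) (hq : 2 ≤ q) (hn : 1 ≤ n) (μ : ℝ) (hμ : 0 < μ)
    (u : Fin q → Fin n → ℝ) (rt st : Fin n → ℝ)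
    (hu1 : ∀ i, u ⟨q - 2, by omega⟩ i =
      (Real.sqrt (mJ q μ 1))⁻¹ * (Wmat q μ 1 0 * rt i + Wmat q μ 1 1 * st i))
    (hu2 : ∀ i, u ⟨q - 1, by omega⟩ i =
      (Real.sqrt (mJ q μ 2))⁻¹ * (Wmat q μ 0 0 * rt i + Wmat q μ 0 1 * st i))
    -- `w_l = Σ_{m=1}^{q−2} α_{m,l} u_m`
    (w : Fin q → Fin n → ℝ)
    (hw : ∀ l i, w l i = ∑ m : Fin q, omegaVec q l m * u m i)
    -- the quantity `G_l`
    (G : Fin q → ℝ)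
    (hG : ∀ l, G l =
      (∑ m : Fin q, ∑ m' : Fin q, omegaVec q l m * omegaVec q l m' *
        ∑ i, u m i * u m' i)
      + (2 / Real.sqrt ((q : ℝ) - 1 + xJ q μ 1 ^ 2)) *
          ∑ m : Fin q, omegaVec q l m * ∑ i, u m i * u ⟨q - 2, by omega⟩ i
      + (2 / Real.sqrt ((q : ℝ) - 1 + xJ q μ 2 ^ 2)) *
          ∑ m : Fin q, omegaVec q l m * ∑ i, u m i * u ⟨q - 1, by omega⟩ i)
    -- the quantity `T`
    (T : ℝ)
    (hT : T =
      ((xJ q μ 2 ^ 2 - 1) / (2 * ((q : ℝ) - 1 + xJ q μ 2 ^ 2))) *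
        (∑ i, u ⟨q - 1, by omega⟩ i * u ⟨q - 1, by omega⟩ i)
      + ((xJ q μ 1 ^ 2 - 1) / (2 * ((q : ℝ) - 1 + xJ q μ 1 ^ 2))) *
        (∑ i, u ⟨q - 2, by omega⟩ i * u ⟨q - 2, by omega⟩ i)
      + ((xJ q μ 1 * xJ q μ 2 - 1) /
          (Real.sqrt ((q : ℝ) - 1 + xJ q μ 1 ^ 2) * Real.sqrt ((q : ℝ) - 1 + xJ q μ 2 ^ 2))) *
        (∑ i, u ⟨q - 1, by omega⟩ i * u ⟨q - 2, by omega⟩ i)) :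
    (∀ l : Fin q, G l =
      (∑ i, w l i * w l i)
      + 2 * Real.sqrt (1 / μ + (q : ℝ) / ((q : ℝ) - 1)) * ∑ i, w l i * rt i) ∧
    T = (1 / 2) * (1 + μ * (q : ℝ) / ((q : ℝ) - 1))⁻¹ *
      (-(((q : ℝ) / ((q : ℝ) - 1)) * (2 + μ * (q : ℝ) / ((q : ℝ) - 1))) * (∑ i, rt i * rt i)
        + ((q : ℝ) / ((q : ℝ) - 1)) * (∑ i, st i * st i)
        + (2 / Real.sqrt μ) * Real.sqrt ((q : ℝ) / ((q : ℝ) - 1)) * (∑ i, rt i * st i)) := by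
  obtain ⟨hb0, hb1, ha1, hsum, hprod⟩ := mJ_facts q hq μ hμ
  have hq' : (2 : ℝ) ≤ q := by exact_mod_cast hq
  simp only [Wmat, Matrix.of_apply, if_true, one_ne_zero, if_false] at hu1 hu2
  simp only [xJ] at *
  generalize mJ q μ 1 = a at *
  generalize mJ q μ 2 = b at *
  generalize hQ : (q : ℝ) = Q at *
  have ha0 : 0 < a := by linarith
  have hab : 0 < a - b := by linarith
  have ha1' : 0 < a - 1 := by linarith
  have hb1' : 0 < 1 - b := by linarith
  have hs0 : 0 < a + b - 1 := by linarith
  have hQe : Q = (a + b - 1) / (a * b) := by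
    rw [eq_div_iff (by positivity)]; linarith
  have hd : Q - 1 = (a - 1) * (1 - b) / (a * b) := by
    rw [hQe]; field_simp; ring
  have hx1 : 1 - Q * a = (1 - a) / b := by rw [hQe]; field_simp; ring
  have hx2 : 1 - Q * b = (1 - b) / a := by rw [hQe]; field_simp; ring
  have hN1 : Q - 1 + (1 - Q * a) ^ 2 = (a - 1) * (a - b) * (a + b - 1) / (a * b ^ 2) := by
    rw [hd, hx1]; field_simp; ring
  have hN2 : Q - 1 + (1 - Q * b) ^ 2 = (1 - b) * (a - b) * (a + b - 1) / (a ^ 2 * b) := by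
    rw [hd, hx2]; field_simp; ring
  have hC : 1 / μ + Q / (Q - 1) = a * b / ((a + b - 1) * ((a - 1) * (1 - b))) +
      (a + b - 1 - a * b + (a + b - 1) ^ 2 - a * b) / ((a + b - 1) * ((a - 1) * (1 - b))) := by
    rw [hd, ← hsum, hQe]; field_simp; ring
  have hCpos : 0 < 1 / μ + Q / (Q - 1) := by
    have : 0 < Q - 1 := by linarith
    positivity
  have hN1p : 0 < Q - 1 + (1 - Q * a) ^ 2 := by rw [hN1]; positivity
  have hN2p : 0 < Q - 1 + (1 - Q * b) ^ 2 := by rw [hN2]; positivity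
  set A := Real.sqrt a with hA
  set B := Real.sqrt b with hB
  have hA2 : A ^ 2 = a := Real.sq_sqrt ha0.le
  have hB2 : B ^ 2 = b := Real.sq_sqrt hb0.le
  have hA0 : 0 < A := Real.sqrt_pos.2 ha0
  have hB0 : 0 < B := Real.sqrt_pos.2 hb0
  have hd0 : 0 < Q - 1 := by linarith
  obtain ⟨D, hD⟩ : ∃ D, D = Real.sqrt (Q - 1) := ⟨_, rfl⟩
  have hD0 : 0 < D := hD ▸ Real.sqrt_pos.2 hd0
  have hD2 : D ^ 2 = (a - 1) * (1 - b) / (a * b) := by rw [hD, Real.sq_sqrt hd0.le, hd]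
  have hK : 2 / Real.sqrt μ * Real.sqrt (Q / (Q - 1)) = 2 / (A * B * D) := by
    rw [← hprod, Real.sqrt_mul (by linarith), Real.sqrt_mul ha0.le, Real.sqrt_div (by linarith),
      ← hA, ← hB, ← hD]
    have : 0 < Real.sqrt Q := Real.sqrt_pos.2 (by linarith)
    field_simp
  have hL : 1 + μ * Q / (Q - 1) = μ * (1 / μ + Q / (Q - 1)) := by field_simp
  rw [hK, hL]
  set P := Real.sqrt (Q - 1 + (1 - Q * a) ^ 2) with hP
  set R := Real.sqrt (Q - 1 + (1 - Q * b) ^ 2) with hR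
  set C := Real.sqrt (1 / μ + Q / (Q - 1)) with hCC
  have hP0 : 0 < P := Real.sqrt_pos.2 hN1p
  have hR0 : 0 < R := Real.sqrt_pos.2 hN2p
  have hC0 : 0 < C := Real.sqrt_pos.2 hCpos
  have hP2 : P ^ 2 = (a - 1) * (a - b) * (a + b - 1) / (a * b ^ 2) := by
    rw [hP, Real.sq_sqrt hN1p.le, hN1]
  have hR2 : R ^ 2 = (1 - b) * (a - b) * (a + b - 1) / (a ^ 2 * b) := by
    rw [hR, Real.sq_sqrt hN2p.le, hN2]
  have hC2 : C ^ 2 = 1 / μ + Q / (Q - 1) := Real.sq_sqrt hCpos.le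
  have hPR : P * R = D * ((a - b) * (a + b - 1) / (a * b)) := by
    refine (pow_left_inj₀ (by positivity) (by positivity) two_ne_zero).1 ?_
    rw [mul_pow, mul_pow, hP2, hR2, hD2]
    field_simp
  have hv1 : ∀ i, u ⟨q - 2, by omega⟩ i = (1 / (C * a * P)) * rt i + (-(1 / (C * (A * B) * R))) * st i := by
    intro i
    rw [hu1, ← hA2]; field_simp
  have hv2 : ∀ i, u ⟨q - 1, by omega⟩ i = (1 / (C * b * R)) * rt i + (1 / (C * (A * B) * P)) * st i := by
    intro i
    rw [hu2, ← hB2]; field_simp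
  simp only [hv1, hv2] at hG hT
  have hAB2 : (A * B) ^ 2 = a * b := by rw [mul_pow, hA2, hB2]
  have hAB0 : 0 < A * B := by positivity
  generalize A * B = M at *
  constructor
  · intro l
    rw [hG l, sum_dot_both, sum_dot_left, sum_dot_left]
    simp only [← hw]
    rw [dot_lin_right, dot_lin_right]
    have key : 1 / (a * P ^ 2) + 1 / (b * R ^ 2) = C ^ 2 := by
      rw [hC2, hC, hP2, hR2]; field_simp; ring
    have k1 : 2 / P * (1 / (C * a * P)) + 2 / R * (1 / (C * b * R)) = 2 * C := by
      have : 2 / P * (1 / (C * a * P)) + 2 / R * (1 / (C * b * R))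
        = 2 / C * (1 / (a * P ^ 2) + 1 / (b * R ^ 2)) := by field_simp
      rw [this, key]; field_simp
    have k2 : 2 / P * (-(1 / (C * M * R))) + 2 / R * (1 / (C * M * P)) = 0 := by
      field_simp; ring
    linear_combination (∑ i, w l i * rt i) * k1 + (∑ i, w l i * st i) * k2
  · rw [hT, dot_lin, dot_lin, dot_lin, ← hC2, hN1, hN2, hx1, hx2, mul_div_assoc μ Q, hd, hPR,
      show Q / ((a - 1) * (1 - b) / (a * b)) = (a + b - 1) / ((a - 1) * (1 - b)) by
        rw [hQe]; field_simp, ← hsum]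
    generalize (∑ i, rt i * rt i) = X
    generalize (∑ i, st i * st i) = Y
    generalize (∑ i, rt i * st i) = Z
    have i1 : (1 / (C * b * R)) * (1 / (C * b * R)) = 1 / (C ^ 2 * b ^ 2 * R ^ 2) := by
      field_simp
    have i2 : (1 / (C * a * P)) * (1 / (C * a * P)) = 1 / (C ^ 2 * a ^ 2 * P ^ 2) := by
      field_simp
    have i3 : (1 / (C * M * P)) * (1 / (C * M * P)) = 1 / (C ^ 2 * M ^ 2 * P ^ 2) := by
      field_simp
    have i4 : -(1 / (C * M * R)) * -(1 / (C * M * R)) = 1 / (C ^ 2 * M ^ 2 * R ^ 2) := by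
      field_simp
    have i5 : (1 / (C * b * R)) * (1 / (C * M * P)) = 1 / (C ^ 2 * b * M * (P * R)) := by
      field_simp
    have i5' : (1 / (C * M * P)) * (1 / (C * b * R)) = 1 / (C ^ 2 * b * M * (P * R)) := by
      field_simp
    have i6 : (1 / (C * a * P)) * -(1 / (C * M * R)) = -(1 / (C ^ 2 * a * M * (P * R))) := by
      field_simp
    have i6' : -(1 / (C * M * R)) * (1 / (C * a * P)) = -(1 / (C ^ 2 * a * M * (P * R))) := by
      field_simp
    have i7 : (1 / (C * b * R)) * (1 / (C * a * P)) = 1 / (C ^ 2 * a * b * (P * R)) := by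
      field_simp
    have i8 : (1 / (C * M * P)) * -(1 / (C * M * R)) = -(1 / (C ^ 2 * M ^ 2 * (P * R))) := by
      field_simp
    have i9 : (1 / (C * b * R)) * -(1 / (C * M * R)) = -(1 / (C ^ 2 * b * M * R ^ 2)) := by
      field_simp
    have i10 : (1 / (C * M * P)) * (1 / (C * a * P)) = 1 / (C ^ 2 * a * M * P ^ 2) := by
      field_simp
    rw [i1, i2, i3, i4, i5, i5', i6, i6', i7, i8, i9, i10, hPR, hP2, hR2, hAB2]
    have hDD : ((1 - a) / b * ((1 - b) / a) - 1) / (D * ((a - b) * (a + b - 1) / (a * b))) *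
        (1 / (C ^ 2 * a * b * (D * ((a - b) * (a + b - 1) / (a * b)))) * X +
        -(1 / (C ^ 2 * (a * b) * (D * ((a - b) * (a + b - 1) / (a * b))))) * Y)
        = ((1 - a) / b * ((1 - b) / a) - 1) / (D ^ 2 * ((a - b) * (a + b - 1) / (a * b)) ^ 2) *
          (X - Y) / (C ^ 2 * a * b) := by
      field_simp; ring
    rw [mul_add (((1 - a) / b * ((1 - b) / a) - 1) / _) (_ + _), hDD, hD2]
    field_simp
    ring

end
end

section
/- For every natural number t, det(I + t·P) = 1 − μ·t(t+1)·q/(q−1). -/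
open MeasureTheory ProbabilityTheory Real Finset Matrix

noncomputable section

/-- The matrix `Q_ℓ` with entries
`Q_{ℓ,mm'} = μ ω_{m,ℓ} ω_{m',ℓ} + √μ √(1+μq/(q−1)) (ω_{m,ℓ} δ_{m',q−1} + ω_{m',ℓ} δ_{m,q−1})`. -/
def Qmat (q : ℕ) (μ : ℝ) (l : Fin q) : Matrix (Fin q) (Fin q) ℝ :=
  Matrix.of fun m m' =>
    μ * omegaVec q l m * omegaVec q l m'
    + Real.sqrt μ * Real.sqrt (1 + μ * (q : ℝ) / ((q : ℝ) - 1)) *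
      (omegaVec q l m * (if (m' : ℕ) + 1 = q - 1 then 1 else 0)
        + omegaVec q l m' * (if (m : ℕ) + 1 = q - 1 then 1 else 0))

/-- The matrix `P` with entries `P_{mm'} = (1+μq/(q−1))⁻¹` times:
`μq/(q−1)` if `m=m'=q`; `−μq/(q−1)(2+μq/(q−1))` if `m=m'=q−1`;
`√μ √(q/(q−1))` if `{m,m'} = {q−1,q}`; `0` otherwise. -/
def Pmat (q : ℕ) (μ : ℝ) : Matrix (Fin q) (Fin q) ℝ :=
  Matrix.of fun m m' =>
    (1 + μ * (q : ℝ) / ((q : ℝ) - 1))⁻¹ *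
      (if (m : ℕ) + 1 = q ∧ (m' : ℕ) + 1 = q then μ * (q : ℝ) / ((q : ℝ) - 1)
       else if (m : ℕ) + 1 = q - 1 ∧ (m' : ℕ) + 1 = q - 1 then
         -(μ * (q : ℝ) / ((q : ℝ) - 1)) * (2 + μ * (q : ℝ) / ((q : ℝ) - 1))
       else if ((m : ℕ) + 1 = q ∧ (m' : ℕ) + 1 = q - 1) ∨
               ((m : ℕ) + 1 = q - 1 ∧ (m' : ℕ) + 1 = q) then
         Real.sqrt μ * Real.sqrt ((q : ℝ) / ((q : ℝ) - 1))
       else 0)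

/-- first determinant in the Proposition of the paper.
For every natural number `t`, `det(I + t·P) = 1 − μ t(t+1) q/(q−1)`. -/
theorem det_I_add_smul_P
    (q : ℕ) (hq : 2 ≤ q) (μ : ℝ) (hμ : 0 < μ) (t : ℕ) :
    (1 + (t : ℝ) • Pmat q μ).det
      = 1 - μ * (t : ℝ) * ((t : ℝ) + 1) * (q : ℝ) / ((q : ℝ) - 1) := by
  obtain ⟨n, rfl⟩ : ∃ n, q = n + 2 := ⟨q - 2, by omega⟩
  have hs : Real.sqrt μ * Real.sqrt (((n + 2 : ℕ) : ℝ) / (((n + 2 : ℕ) : ℝ) - 1))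
      = Real.sqrt (μ * ((n + 2 : ℕ) : ℝ) / (((n + 2 : ℕ) : ℝ) - 1)) := by
    rw [← Real.sqrt_mul hμ.le, mul_div_assoc]
  have hr : μ * (t : ℝ) * ((t : ℝ) + 1) * ((n + 2 : ℕ) : ℝ) / (((n + 2 : ℕ) : ℝ) - 1)
      = (t : ℝ) * ((t : ℝ) + 1) * (μ * ((n + 2 : ℕ) : ℝ) / (((n + 2 : ℕ) : ℝ) - 1)) := by
    ring
  have ha : 0 < μ * ((n + 2 : ℕ) : ℝ) / (((n + 2 : ℕ) : ℝ) - 1) := by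
    have h1 : (0 : ℝ) < ((n + 2 : ℕ) : ℝ) - 1 := by
      push_cast
      have : (0 : ℝ) ≤ n := Nat.cast_nonneg n
      linarith
    positivity
  rw [hr]
  unfold Pmat
  rw [hs]
  generalize μ * ((n + 2 : ℕ) : ℝ) / (((n + 2 : ℕ) : ℝ) - 1) = a at ha
  have hsq : Real.sqrt a * Real.sqrt a = a := Real.mul_self_sqrt ha.le
  generalize Real.sqrt a = s at hsq
  rw [← Matrix.det_submatrix_equiv_self (finSumFinEquiv (m := n) (n := 2))]
  have key : ∀ M : Matrix (Fin (n + 2)) (Fin (n + 2)) ℝ,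
      M.submatrix (finSumFinEquiv (m := n) (n := 2)) (finSumFinEquiv (m := n) (n := 2))
        = Matrix.fromBlocks 1 0 0
          !![1 - (t : ℝ) * ((1 + a)⁻¹ * (a * (2 + a))), (t : ℝ) * ((1 + a)⁻¹ * s);
            (t : ℝ) * ((1 + a)⁻¹ * s), 1 + (t : ℝ) * ((1 + a)⁻¹ * a)] →
      (M.submatrix (finSumFinEquiv (m := n) (n := 2)) (finSumFinEquiv (m := n) (n := 2))).det
        = 1 - (t : ℝ) * ((t : ℝ) + 1) * a := by
    intro M hM
    rw [hM, Matrix.det_fromBlocks_zero₂₁, Matrix.det_one, Matrix.det_fin_two_of]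
    have : (1 + a) ≠ 0 := by positivity
    field_simp
    linear_combination (-(t : ℝ) ^ 2) * hsq
  apply key
  ext i j
  rcases i with i | i <;> rcases j with j | j
  · have h1 : (i : ℕ) ≠ n + 1 := by omega
    have h2 : (i : ℕ) ≠ n := by omega
    simp [Matrix.one_apply, h1, h2, Fin.ext_iff]
  · have h1 : (i : ℕ) ≠ n + 1 := by omega
    have h2 : (i : ℕ) ≠ n := by omega
    have h3 : (i : ℕ) ≠ n + (j : ℕ) := by omega
    simp [Matrix.one_apply, h1, h2, h3, Fin.ext_iff]
  · have h1 : (j : ℕ) ≠ n + 1 := by omega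
    have h2 : (j : ℕ) ≠ n := by omega
    have h3 : Fin.natAdd n i ≠ Fin.castAdd 2 j := by
      intro h
      have h4 := congrArg Fin.val h
      simp only [Fin.val_natAdd, Fin.val_castAdd] at h4
      omega
    simp [Matrix.one_apply_ne h3, h1, h2]
  · fin_cases i <;> fin_cases j <;> simp [Matrix.one_apply, Fin.ext_iff]
    ring

end
end
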